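/- arXiv:2106.00500 — 3 statements merged into one kernel-verified Lean document; each statement's English description precedes it below -/
import Mathlib

section
/- For every N ≥ 2, β > 0, J > 0 and b ≥ 0, setting A = S_1^z S_2^z, one has the identity −(2/(N−1)) · E[⟨U_N⟩] = βJ · E[⟨A|A⟩ − ⟨A⟩²], where ⟨A|A⟩ is the Duhamel–Kubo–Bogolyubov product of A with itself with respect to the Gibbs state of H_N. -/
open Matrix MeasureTheory ProbabilityTheory

noncomputable section

abbrev Conf (N : ℕ) := Fin N → Fin 2

def Sz (N : ℕ) (j : Fin N) : Matrix (Conf N) (Conf N) ℂ :=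
  Matrix.diagonal fun σ => if σ j = 0 then 1 else -1

def Sx (N : ℕ) (j : Fin N) : Matrix (Conf N) (Conf N) ℂ :=
  Matrix.of fun σ τ => if τ = Function.update σ j (1 - σ j) then 1 else 0

def UN (N : ℕ) (g : Fin N → Fin N → ℝ) : Matrix (Conf N) (Conf N) ℂ :=
  (-(1 / Real.sqrt N)) • ∑ j : Fin N, ∑ k : Fin N,
    if j < k then g j k • (Sz N j * Sz N k) else 0

def HN (N : ℕ) (J b : ℝ) (g : Fin N → Fin N → ℝ) : Matrix (Conf N) (Conf N) ℂ :=
  J • UN N g - b • ∑ j : Fin N, Sx N j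

/-- Gibbs expectation (real part of the trace ratio). -/
def gibbs {n : Type*} [Fintype n] [DecidableEq n] (β : ℝ) (H A : Matrix n n ℂ) : ℝ :=
  ((NormedSpace.exp ((-β) • H) * A).trace / (NormedSpace.exp ((-β) • H)).trace).re

/-- Duhamel–Kubo–Bogolyubov product `⟨A|B⟩`. -/
def duhamel {n : Type*} [Fintype n] [DecidableEq n] (β : ℝ) (H A B : Matrix n n ℂ) : ℝ :=
  ∫ t in (0:ℝ)..1,
    gibbs β H (NormedSpace.exp ((t * β) • H) * Aᴴ *
      NormedSpace.exp ((-(t * β)) • H) * B)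


theorem aux_duhamel {𝔸 : Type*} [NormedRing 𝔸] [NormedAlgebra ℝ 𝔸] [CompleteSpace 𝔸] (X Y : 𝔸) :
    HasDerivAt (fun s : ℝ => NormedSpace.exp (X + s • Y))
      (∫ t in (0:ℝ)..1, NormedSpace.exp ((1 - t) • X) * Y * NormedSpace.exp (t • X)) 0 := by
  let _ : NormedAlgebra ℚ 𝔸 := NormedAlgebra.restrictScalars ℚ ℝ 𝔸
  have hcont : Continuous (NormedSpace.exp : 𝔸 → 𝔸) := NormedSpace.exp_continuous
  set G : ℝ → 𝔸 := fun s => ∫ t in (0:ℝ)..1,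
    NormedSpace.exp ((1 - t) • X) * Y * NormedSpace.exp (t • (X + s • Y)) with hG
  have key : ∀ s : ℝ, NormedSpace.exp (X + s • Y) = NormedSpace.exp X + s • G s := by
    intro s
    have hd : ∀ t ∈ Set.uIcc (0:ℝ) 1, HasDerivAt
        (fun t : ℝ => NormedSpace.exp ((1 - t) • X) * NormedSpace.exp (t • (X + s • Y)))
        (s • (NormedSpace.exp ((1 - t) • X) * Y * NormedSpace.exp (t • (X + s • Y)))) t := by
      intro t _
      have h1 := (hasDerivAt_exp_smul_const X (1 - t)).scomp t ((hasDerivAt_id t).const_sub 1)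
      have h2 := hasDerivAt_exp_smul_const' (X + s • Y) t
      refine (h1.mul h2).congr_deriv ?_
      simp only [Function.comp, neg_smul, one_smul, mul_add, add_mul, mul_smul_comm, smul_mul_assoc,
        neg_mul, mul_assoc]
      abel
    have hc : Continuous fun t : ℝ => 
        (s • (NormedSpace.exp ((1 - t) • X) * Y * NormedSpace.exp (t • (X + s • Y)))) := by
      fun_prop
    have := intervalIntegral.integral_eq_sub_of_hasDerivAt hd (hc.intervalIntegrable _ _)
    rw [intervalIntegral.integral_smul] at this
    simp only [hG]
    rw [this]
    simp
  have hGc : Continuous G := by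
    apply intervalIntegral.continuous_parametric_intervalIntegral_of_continuous'
    simp only [Function.uncurry_def]
    fun_prop
  have h0 : G 0 = ∫ t in (0:ℝ)..1, NormedSpace.exp ((1 - t) • X) * Y * NormedSpace.exp (t • X) := by
    simp [hG]
  rw [← h0, hasDerivAt_iff_tendsto_slope]
  have : Filter.Tendsto G (nhdsWithin 0 {0}ᶜ) (nhds (G 0)) := hGc.continuousAt.mono_left inf_le_left
  refine this.congr' ?_
  filter_upwards [self_mem_nhdsWithin] with s hs
  have hs : s ≠ 0 := hs
  rw [slope_def_module, key, key]
  simp [smul_smul, hs]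

section
open scoped Norms.Operator
variable {n : Type*} [Fintype n] [DecidableEq n]

theorem aux_exp_cont : Continuous (NormedSpace.exp : Matrix n n ℝ → Matrix n n ℝ) :=
  NormedSpace.exp_continuous

theorem aux_duhamel_mat (X Y A : Matrix n n ℝ) :
    HasDerivAt (fun s : ℝ => (NormedSpace.exp (X + s • Y) * A).trace)
      (∫ t in (0:ℝ)..1, (NormedSpace.exp ((1 - t) • X) * Y * NormedSpace.exp (t • X) * A).trace) 0 := by
  let L : Matrix n n ℝ →L[ℝ] ℝ := LinearMap.toContinuousLinearMap
    ((Matrix.traceLinearMap n ℝ ℝ).comp (LinearMap.mulRight ℝ A))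
  have h := L.hasFDerivAt.comp_hasDerivAt (0:ℝ) (aux_duhamel X Y)
  have hc := aux_exp_cont (n := n)
  have h' := L.intervalIntegral_comp_comm (μ := volume) (a := 0) (b := 1) (f := fun t : ℝ => NormedSpace.exp ((1 - t) • X) * Y * NormedSpace.exp (t • X)) ?_
  · exact h' ▸ h
  · apply Continuous.intervalIntegrable
    fun_prop

theorem aux_pow_nonneg {M : Matrix n n ℝ} (h : ∀ i j, 0 ≤ M i j) (k : ℕ) : ∀ i j, 0 ≤ (M ^ k) i j := by
  induction k with
  | zero => intro i j; simp [Matrix.one_apply]; split_ifs <;> simp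
  | succ k ih =>
    intro i j
    rw [pow_succ, Matrix.mul_apply]
    exact Finset.sum_nonneg fun l _ => mul_nonneg (ih i l) (h l j)

theorem aux_exp_ge_one {M : Matrix n n ℝ} (h : ∀ i j, 0 ≤ M i j) (i j : n) :
    (1 : Matrix n n ℝ) i j ≤ NormedSpace.exp M i j := by
  have h1 : HasSum (fun k : ℕ => ((k.factorial : ℝ)⁻¹ • M ^ k)) (NormedSpace.exp M) :=
    NormedSpace.exp_series_hasSum_exp' (𝕂 := ℝ) M
  have h2 : HasSum (fun k : ℕ => ((k.factorial : ℝ)⁻¹ • M ^ k) i j) (NormedSpace.exp M i j) := by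
    exact (Pi.hasSum.1 (Pi.hasSum.1 h1 i) j)
  have h3 := sum_le_hasSum {0} (fun k _ => ?_) h2
  · simpa using h3
  · exact mul_nonneg (by positivity) (aux_pow_nonneg h k i j)

/-- off-diagonal nonneg -/
theorem aux_exp_nonneg {M : Matrix n n ℝ} (h : ∀ i j, i ≠ j → 0 ≤ M i j)  :
    (∀ i j, 0 ≤ NormedSpace.exp M i j) ∧ ∀ i, 0 < NormedSpace.exp M i i := by
  set c : ℝ := ∑ i, |M i i| with hc
  have h1 : ∀ i j, 0 ≤ (M + algebraMap ℝ (Matrix n n ℝ) c) i j := by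
    intro i j
    by_cases hij : i = j
    · subst hij
      have : |M i i| ≤ c := Finset.single_le_sum (f := fun i => |M i i|) (fun i _ => abs_nonneg _) (Finset.mem_univ i)
      simp [Matrix.algebraMap_matrix_apply]
      linarith [neg_abs_le (M i i)]
    · simpa [Matrix.algebraMap_matrix_apply, hij] using h i j hij
  have hexp : NormedSpace.exp (algebraMap ℝ (Matrix n n ℝ) c) = Real.exp c • (1 : Matrix n n ℝ) := by
    rw [Matrix.algebraMap_eq_diagonal, Matrix.exp_diagonal, Matrix.smul_one_eq_diagonal,
      Pi.exp_def]
    simp [Real.exp_eq_exp_ℝ]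
  have h2 : NormedSpace.exp M = Real.exp (-c) • NormedSpace.exp (M + algebraMap ℝ (Matrix n n ℝ) c) := by
    rw [Matrix.exp_add_of_commute _ _ (Algebra.commute_algebraMap_right _ _),
      hexp, mul_smul_comm, mul_one, smul_smul, ← Real.exp_add]
    simp
  rw [h2]
  refine ⟨fun i j => ?_, fun i => ?_⟩
  · refine mul_nonneg (Real.exp_pos _).le (le_trans ?_ (aux_exp_ge_one h1 i j))
    simp [Matrix.one_apply]; split_ifs <;> simp
  · refine mul_pos (Real.exp_pos _) (lt_of_lt_of_le ?_ (aux_exp_ge_one h1 i i))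
    simp

theorem aux_exp_submatrix {m : Type*} [Fintype m] [DecidableEq m] (e : m ≃ n) (M : Matrix n n ℝ) :
    NormedSpace.exp (M.submatrix e e) = (NormedSpace.exp M).submatrix e e := by
  have := NormedSpace.map_exp (Matrix.reindexAlgEquiv ℝ ℝ e.symm) (by 
    exact continuous_id.matrix_submatrix _ _) M
  exact this.symm

theorem aux_exp_map (M : Matrix n n ℝ) :
    NormedSpace.exp (M.map Complex.ofReal) = (NormedSpace.exp M).map Complex.ofReal := by
  have := NormedSpace.map_exp (Complex.ofRealHom.mapMatrix (m := n)) (by 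
    exact continuous_id.matrix_map Complex.continuous_ofReal) M
  exact this.symm
end

theorem aux_stein (f f' : ℝ → ℝ) (hf : ∀ x, HasDerivAt f (f' x) x) (hc : Continuous f')
   (C C' : ℝ) (hb : ∀ x, |f x| ≤ C) (hb' : ∀ x, |f' x| ≤ C') :
    ∫ x, x * f x ∂(gaussianReal 0 1) = ∫ x, f' x ∂(gaussianReal 0 1) := by
  have hfc : Continuous f := continuous_iff_continuousAt.2 fun x => (hf x).continuousAt
  rw [integral_gaussianReal_eq_integral_smul one_ne_zero, integral_gaussianReal_eq_integral_smul one_ne_zero]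
  have hpd : ∀ x, HasDerivAt (gaussianPDFReal 0 1) (-x * gaussianPDFReal 0 1 x) x := by
    intro x
    have h1 : HasDerivAt (fun x : ℝ => -(x - 0)^2 / (2 * (1:ℝ))) (-x) x := by
      have := (((hasDerivAt_id x).sub_const 0).pow 2).neg.div_const (2 * (1:ℝ))
      refine this.congr_deriv ?_
      simp; ring
    have h2 := (h1.exp).const_mul ((√(2 * Real.pi * (1:ℝ)))⁻¹)
    have h3 : gaussianPDFReal 0 1 = fun x => (√(2 * Real.pi * (1:ℝ)))⁻¹ * Real.exp (-(x - 0)^2 / (2 * (1:ℝ))) := by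
      rw [gaussianPDFReal_def]; simp
    rw [h3]
    refine h2.congr_deriv ?_
    ring
  have hi0 : Integrable (gaussianPDFReal 0 1) := integrable_gaussianPDFReal 0 1
  have hi1 : Integrable (fun x => -x * gaussianPDFReal 0 1 x) := by
    have := (memLp_id_gaussianReal (μ := 0) (v := 1) 1).integrable (by simp)
    rw [gaussianReal_of_var_ne_zero _ one_ne_zero, integrable_withDensity_iff (measurable_gaussianPDF _ _) (by simp [gaussianPDF_lt_top])] at this
    simpa [toReal_gaussianPDF] using this
  have := integral_mul_deriv_eq_deriv_mul_of_integrable (u := f) (u' := f') (v := gaussianPDFReal 0 1)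
    (v' := fun x => -x * gaussianPDFReal 0 1 x) (fun x _ => hf x) (fun x _ => hpd x) ?_ ?_ ?_
  · simp only [smul_eq_mul]
    rw [← neg_inj, ← integral_neg]
    have e : ∀ x, -(gaussianPDFReal 0 1 x * (x * f x)) = f x * (-x * gaussianPDFReal 0 1 x) := by intro x; ring
    simp_rw [e, this, mul_comm]
  · exact hi1.bdd_mul hfc.aestronglyMeasurable (Filter.Eventually.of_forall hb)
  · exact hi0.bdd_mul hc.aestronglyMeasurable (Filter.Eventually.of_forall hb')
  · exact hi0.bdd_mul hfc.aestronglyMeasurable (Filter.Eventually.of_forall hb)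

theorem aux_resample {ι : Type*} [Fintype ι] [DecidableEq ι] (ν : Measure ℝ) [IsProbabilityMeasure ν] (p : ι) :
    MeasurePreserving (fun z : (ι → ℝ) × ℝ => Function.update z.1 p z.2)
      ((Measure.pi fun _ : ι => ν).prod ν) (Measure.pi fun _ : ι => ν) := by
  have hm : Measurable (fun z : (ι → ℝ) × ℝ => Function.update z.1 p z.2) := by
    rw [measurable_pi_iff]
    intro i
    by_cases h : i = p
    · subst h; simpa using measurable_snd
    · simp only [Function.update_of_ne h]; fun_prop
  refine ⟨hm, (Measure.pi_eq fun s hs => ?_).symm⟩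
  rw [Measure.map_apply hm (MeasurableSet.univ_pi hs)]
  have : (fun z : (ι → ℝ) × ℝ => Function.update z.1 p z.2) ⁻¹' (Set.univ.pi s)
      = (Set.univ.pi (Function.update s p Set.univ)) ×ˢ (s p) := by
    ext z
    simp only [Set.mem_preimage, Set.mem_pi, Set.mem_univ, true_implies, Set.mem_prod]
    constructor
    · intro h
      refine ⟨fun i => ?_, by simpa using h p⟩
      by_cases hi : i = p
      · subst hi; simp
      · simpa [Function.update_of_ne hi] using h i
    · rintro ⟨h, h'⟩ i
      by_cases hi : i = p
      · subst hi; simpa using h'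
      · simpa [Function.update_of_ne hi] using h i
  rw [this, Measure.prod_prod, Measure.pi_pi, ← Finset.mul_prod_erase _ _ (Finset.mem_univ p),
    ← Finset.mul_prod_erase (a := p) (f := fun i => ν (s i)) _ (Finset.mem_univ p)]
  rw [Finset.prod_congr rfl (g := fun i => ν (s i))]
  · simp [mul_comm]
  · intro i hi
    rw [Function.update_of_ne (Finset.ne_of_mem_erase hi)]

section gibbsreal
variable {n : Type*} [Fintype n] [DecidableEq n]

def mG (K A : Matrix n n ℝ) : ℝ := (NormedSpace.exp K * A).trace / (NormedSpace.exp K).trace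

def dG (K A : Matrix n n ℝ) : ℝ :=
  (∫ t in (0:ℝ)..1, (NormedSpace.exp ((1 - t) • K) * A * NormedSpace.exp (t • K) * A).trace)
    / (NormedSpace.exp K).trace

def fG (K A : Matrix n n ℝ) : ℝ := dG K A - mG K A ^ 2

theorem aux_fG_submatrix {m : Type*} [Fintype m] [DecidableEq m] (e : m ≃ n) (K A : Matrix n n ℝ) :
    fG (K.submatrix e e) (A.submatrix e e) = fG K A := by
  have htr : ∀ M : Matrix n n ℝ, (M.submatrix e e).trace = M.trace := by
    intro M
    simp only [Matrix.trace, Matrix.diag, Matrix.submatrix_apply]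
    exact Equiv.sum_comp e (fun i => M i i)
  have hs : ∀ (t : ℝ) (M : Matrix n n ℝ), t • M.submatrix e e = (t • M).submatrix e e := fun _ _ => rfl
  simp only [fG, dG, mG, hs, aux_exp_submatrix, Matrix.submatrix_mul_equiv, htr]

theorem aux_Z_pos [Nonempty n] {K : Matrix n n ℝ} (h : ∀ i j, i ≠ j → 0 ≤ K i j) :
    0 < (NormedSpace.exp K).trace :=
  Finset.sum_pos (fun i _ => (aux_exp_nonneg h).2 i) Finset.univ_nonempty

theorem aux_mG_bound [Nonempty n] {K : Matrix n n ℝ} (h : ∀ i j, i ≠ j → 0 ≤ K i j)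
    {a : n → ℝ} (ha : ∀ i, |a i| ≤ 1) : |mG K (Matrix.diagonal a)| ≤ 1 := by
  have hZ := aux_Z_pos h
  rw [mG, abs_div, abs_of_pos hZ, div_le_one hZ]
  simp only [Matrix.trace, Matrix.diag, Matrix.mul_diagonal]
  refine (Finset.abs_sum_le_sum_abs _ _).trans (Finset.sum_le_sum fun i _ => ?_)
  rw [abs_mul, abs_of_nonneg ((aux_exp_nonneg h).1 i i)]
  exact mul_le_of_le_one_right ((aux_exp_nonneg h).1 i i) (ha i)

theorem aux_trace_bound {P Q : Matrix n n ℝ} (hP : ∀ i j, 0 ≤ P i j) (hQ : ∀ i j, 0 ≤ Q i j)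
    {a : n → ℝ} (ha : ∀ i, |a i| ≤ 1) :
    |(P * Matrix.diagonal a * Q * Matrix.diagonal a).trace| ≤ (P * Q).trace := by
  simp only [Matrix.trace, Matrix.diag, Matrix.mul_diagonal]
  refine (Finset.abs_sum_le_sum_abs _ _).trans (Finset.sum_le_sum fun i _ => ?_)
  rw [abs_mul]
  refine (mul_le_of_le_one_right (abs_nonneg _) (ha i)).trans ?_
  simp only [Matrix.mul_apply (M := P * Matrix.diagonal a), Matrix.mul_apply (M := P) (N := Q),
    Matrix.mul_diagonal]
  refine (Finset.abs_sum_le_sum_abs _ _).trans (Finset.sum_le_sum fun j _ => ?_)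
  rw [abs_mul, abs_mul, abs_of_nonneg (hP i j), abs_of_nonneg (hQ j i)]
  exact mul_le_mul_of_nonneg_right (mul_le_of_le_one_right (hP i j) (ha j)) (hQ j i)

theorem aux_exp_split (K : Matrix n n ℝ) (t : ℝ) :
    NormedSpace.exp ((1 - t) • K) * NormedSpace.exp (t • K) = NormedSpace.exp K := by
  rw [← Matrix.exp_add_of_commute, ← add_smul]
  · simp
  · exact ((Commute.refl K).smul_left _).smul_right _

theorem aux_dG_bound [Nonempty n] {K : Matrix n n ℝ} (h : ∀ i j, i ≠ j → 0 ≤ K i j)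
    {a : n → ℝ} (ha : ∀ i, |a i| ≤ 1) : |dG K (Matrix.diagonal a)| ≤ 1 := by
  have hZ := aux_Z_pos h
  rw [dG, abs_div, abs_of_pos hZ, div_le_one hZ]
  have := intervalIntegral.norm_integral_le_of_norm_le_const (a := 0) (b := 1)
    (C := (NormedSpace.exp K).trace) (f := fun t : ℝ => (NormedSpace.exp ((1 - t) • K) *
      Matrix.diagonal a * NormedSpace.exp (t • K) * Matrix.diagonal a).trace) ?_
  · simpa using this
  · intro t ht
    rw [Set.uIoc_of_le zero_le_one] at ht
    rw [Real.norm_eq_abs]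
    refine (aux_trace_bound ?_ ?_ ha).trans (by rw [aux_exp_split])
    · exact (aux_exp_nonneg fun i j hij => mul_nonneg (by linarith [ht.2]) (h i j hij)).1
    · exact (aux_exp_nonneg fun i j hij => mul_nonneg (by linarith [ht.1]) (h i j hij)).1

theorem aux_mG_cont {X : Type*} [TopologicalSpace X] {κ : X → Matrix n n ℝ} (hκ : Continuous κ)
    (hZ : ∀ x, (NormedSpace.exp (κ x)).trace ≠ 0) (A : Matrix n n ℝ) :
    Continuous fun x => mG (κ x) A := by
  have hc := aux_exp_cont (n := n)
  have h1 : Continuous fun x => NormedSpace.exp (κ x) := hc.comp hκ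
  exact (h1.matrix_mul continuous_const).matrix_trace.div h1.matrix_trace hZ

theorem aux_dG_cont {X : Type*} [TopologicalSpace X] {κ : X → Matrix n n ℝ} (hκ : Continuous κ)
    (hZ : ∀ x, (NormedSpace.exp (κ x)).trace ≠ 0) (A : Matrix n n ℝ) :
    Continuous fun x => dG (κ x) A := by
  have hc := aux_exp_cont (n := n)
  have h1 : Continuous fun x => NormedSpace.exp (κ x) := hc.comp hκ
  refine Continuous.div ?_ h1.matrix_trace hZ
  apply intervalIntegral.continuous_parametric_intervalIntegral_of_continuous'
  simp only [Function.uncurry_def]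
  have h2 : Continuous fun z : X × ℝ => NormedSpace.exp ((1 - z.2) • κ z.1) := hc.comp (by fun_prop)
  have h3 : Continuous fun z : X × ℝ => NormedSpace.exp (z.2 • κ z.1) := hc.comp (by fun_prop)
  exact (((h2.matrix_mul continuous_const).matrix_mul h3).matrix_mul continuous_const).matrix_trace

theorem aux_fG_cont {X : Type*} [TopologicalSpace X] {κ : X → Matrix n n ℝ} (hκ : Continuous κ)
    (hZ : ∀ x, (NormedSpace.exp (κ x)).trace ≠ 0) (A : Matrix n n ℝ) :
    Continuous fun x => fG (κ x) A :=
  (aux_dG_cont hκ hZ A).sub ((aux_mG_cont hκ hZ A).pow 2)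

theorem aux_fG_bound [Nonempty n] {K : Matrix n n ℝ} (h : ∀ i j, i ≠ j → 0 ≤ K i j)
    {a : n → ℝ} (ha : ∀ i, |a i| ≤ 1) : |fG K (Matrix.diagonal a)| ≤ 2 := by
  have h1 := abs_le.1 (aux_dG_bound h ha)
  have h2 := (sq_le_one_iff_abs_le_one _).2 (aux_mG_bound h ha)
  have h3 := sq_nonneg (mG K (Matrix.diagonal a))
  rw [fG, abs_le]
  constructor <;> linarith

theorem aux_mG_deriv0 (K A : Matrix n n ℝ) (hZ : (NormedSpace.exp K).trace ≠ 0) :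
    HasDerivAt (fun s : ℝ => mG (K + s • A) A) (fG K A) 0 := by
  have h1 := aux_duhamel_mat K A A
  have h2 := aux_duhamel_mat K A 1
  simp only [mul_one] at h2
  have h3 : ∀ t : ℝ, (NormedSpace.exp ((1 - t) • K) * A * NormedSpace.exp (t • K)).trace
      = (NormedSpace.exp K * A).trace := by
    intro t
    rw [Matrix.trace_mul_comm, ← mul_assoc]
    congr 2
    have := aux_exp_split K (1 - t)
    simpa using this
  simp only [h3, intervalIntegral.integral_const, sub_zero, one_smul] at h2
  refine (h1.div h2 (by simpa using hZ)).congr_deriv ?_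
  simp only [fG, dG, mG, zero_smul, add_zero]
  field_simp

theorem aux_mG_deriv (K A : Matrix n n ℝ) (c s : ℝ)
    (hZ : (NormedSpace.exp (K + (c * s) • A)).trace ≠ 0) :
    HasDerivAt (fun s : ℝ => mG (K + (c * s) • A) A) (c * fG (K + (c * s) • A) A) s := by
  have h := aux_mG_deriv0 (K + (c * s) • A) A hZ
  have h1 : HasDerivAt (fun u : ℝ => c * (u - s)) c s := by
    simpa using ((hasDerivAt_id s).sub_const s).const_mul c
  have h0 : (0:ℝ) = c * (s - s) := by simp
  rw [h0] at h
  have h2 := HasDerivAt.comp s h h1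
  rw [mul_comm c (fG _ _)]
  refine h2.congr_of_eventuallyEq (Filter.Eventually.of_forall fun u => ?_)
  simp only [Function.comp]
  rw [add_assoc, ← add_smul]
  congr 3
  ring

variable {ι : Type*} [Fintype ι] [DecidableEq ι]

def kG (B : Matrix n n ℝ) (c : ℝ) (a : ι → n → ℝ) (x : ι → ℝ) : Matrix n n ℝ :=
  B + ∑ p, (c * x p) • Matrix.diagonal (a p)

theorem aux_kG_off {B : Matrix n n ℝ} (hB : ∀ i j, i ≠ j → 0 ≤ B i j) (c : ℝ) (a : ι → n → ℝ)
    (x : ι → ℝ) : ∀ i j, i ≠ j → 0 ≤ kG B c a x i j := by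
  intro i j hij
  simp [kG, Matrix.sum_apply, hij, hB i j hij]

theorem aux_kG_cont (B : Matrix n n ℝ) (c : ℝ) (a : ι → n → ℝ) : Continuous (kG B c a) := by
  unfold kG; fun_prop

theorem aux_kG_update (B : Matrix n n ℝ) (c : ℝ) (a : ι → n → ℝ) (x : ι → ℝ) (p : ι) (s : ℝ) :
    kG B c a (Function.update x p s) =
      kG B c a (Function.update x p 0) + (c * s) • Matrix.diagonal (a p) := by
  simp only [kG]
  rw [← Finset.add_sum_erase _ _ (Finset.mem_univ p),
    ← Finset.add_sum_erase (a := p) (f := fun q => (c * Function.update x p 0 q) • Matrix.diagonal (a q))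
      _ (Finset.mem_univ p)]
  have : ∀ u : ℝ, ∑ q ∈ Finset.univ.erase p, (c * Function.update x p u q) • Matrix.diagonal (a q)
      = ∑ q ∈ Finset.univ.erase p, (c * x q) • Matrix.diagonal (a q) := fun u =>
    Finset.sum_congr rfl fun q hq => by rw [Function.update_of_ne (Finset.ne_of_mem_erase hq)]
  rw [this, this]
  simp
  abel

abbrev gpi (ι : Type*) [Fintype ι] : Measure (ι → ℝ) := Measure.pi fun _ : ι => gaussianReal 0 1

theorem aux_int_fG [Nonempty n] {B : Matrix n n ℝ} (hB : ∀ i j, i ≠ j → 0 ≤ B i j) (c : ℝ)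
    (a : ι → n → ℝ) (ha : ∀ p i, |a p i| ≤ 1) (p : ι) :
    Integrable (fun x : ι → ℝ => fG (kG B c a x) (Matrix.diagonal (a p))) (gpi ι) :=
  Integrable.of_bound (aux_fG_cont (aux_kG_cont B c a)
      (fun x => (aux_Z_pos (aux_kG_off hB c a x)).ne') _).aestronglyMeasurable 2
    (Filter.Eventually.of_forall fun x => aux_fG_bound (aux_kG_off hB c a x) (ha p))

theorem aux_int_xm [Nonempty n] {B : Matrix n n ℝ} (hB : ∀ i j, i ≠ j → 0 ≤ B i j) (c : ℝ)
    (a : ι → n → ℝ) (ha : ∀ p i, |a p i| ≤ 1) (p : ι) :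
    Integrable (fun x : ι → ℝ => x p * mG (kG B c a x) (Matrix.diagonal (a p))) (gpi ι) := by
  refine Integrable.mul_bdd (c := 1) ?_ (aux_mG_cont (aux_kG_cont B c a)
      (fun x => (aux_Z_pos (aux_kG_off hB c a x)).ne') _).aestronglyMeasurable
    (Filter.Eventually.of_forall fun x => aux_mG_bound (aux_kG_off hB c a x) (ha p))
  have h := (memLp_id_gaussianReal (μ := 0) (v := 1) 1).integrable (by simp)
  exact (measurePreserving_eval (fun _ : ι => gaussianReal 0 1) p).integrable_comp_of_integrable h

theorem aux_ibp [Nonempty n] {B : Matrix n n ℝ} (hB : ∀ i j, i ≠ j → 0 ≤ B i j) (c : ℝ)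
    (a : ι → n → ℝ) (ha : ∀ p i, |a p i| ≤ 1) (p : ι) :
    ∫ x : ι → ℝ, x p * mG (kG B c a x) (Matrix.diagonal (a p)) ∂(gpi ι)
      = c * ∫ x : ι → ℝ, fG (kG B c a x) (Matrix.diagonal (a p)) ∂(gpi ι) := by
  have hmp : MeasurePreserving (fun z : (ι → ℝ) × ℝ => Function.update z.1 p z.2)
      ((gpi ι).prod (gaussianReal 0 1)) (gpi ι) := aux_resample (gaussianReal 0 1) p
  have hZ := fun x : ι → ℝ => (aux_Z_pos (aux_kG_off hB c a x)).ne'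
  have h1 := aux_int_xm hB c a ha p
  have h2 := (aux_int_fG hB c a ha p).const_mul c
  rw [← integral_const_mul]
  have e1 := integral_map (μ := (gpi ι).prod (gaussianReal 0 1)) hmp.measurable.aemeasurable
    (by rw [hmp.map_eq]; exact h1.aestronglyMeasurable)
  have e2 := integral_map (μ := (gpi ι).prod (gaussianReal 0 1)) hmp.measurable.aemeasurable
    (by rw [hmp.map_eq]; exact h2.aestronglyMeasurable)
  rw [hmp.map_eq] at e1 e2
  rw [e1.trans (integral_prod _ (hmp.integrable_comp_of_integrable h1)),
    e2.trans (integral_prod _ (hmp.integrable_comp_of_integrable h2))]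
  congr 1
  funext x
  simp only [Function.update_self]
  refine aux_stein (fun s => mG (kG B c a (Function.update x p s)) (Matrix.diagonal (a p)))
    (fun s => c * fG (kG B c a (Function.update x p s)) (Matrix.diagonal (a p))) ?_ ?_ 1 (|c| * 2) ?_ ?_
  · intro s
    have := aux_mG_deriv (kG B c a (Function.update x p 0)) (Matrix.diagonal (a p)) c s
      (by rw [← aux_kG_update]; exact hZ _)
    simpa only [← aux_kG_update] using this
  · refine continuous_const.mul (aux_fG_cont ((aux_kG_cont B c a).comp ?_) (fun s => hZ _) _)
    exact continuous_const.update p continuous_id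
  · exact fun s => aux_mG_bound (aux_kG_off hB c a _) (ha p)
  · intro s
    rw [abs_mul]
    exact mul_le_mul_of_nonneg_left (aux_fG_bound (aux_kG_off hB c a _) (ha p)) (abs_nonneg c)

/-- symmetry -/
theorem aux_symm (B : Matrix n n ℝ) (c : ℝ)
    (a : ι → n → ℝ) (e : n ≃ n) (φ : ι ≃ ι) (hBe : B.submatrix e e = B)
    (hφ : ∀ p i, a (φ p) i = a p (e i)) (p : ι) :
    ∫ x : ι → ℝ, fG (kG B c a x) (Matrix.diagonal (a p)) ∂(gpi ι)
      = ∫ x : ι → ℝ, fG (kG B c a x) (Matrix.diagonal (a (φ p))) ∂(gpi ι) := by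
  have hd : ∀ p, (Matrix.diagonal (a p)).submatrix e e = Matrix.diagonal (a (φ p)) := by
    intro p
    rw [Matrix.submatrix_diagonal_equiv]
    congr 1
    funext i
    exact (hφ p i).symm
  have h1 : ∀ x : ι → ℝ, (kG B c a (fun q => x (φ q))).submatrix e e = kG B c a x := by
    intro x
    rw [kG, kG, Matrix.submatrix_add, Pi.add_apply, Pi.add_apply, hBe]
    congr 1
    rw [← Equiv.sum_comp φ (fun q => (c * x q) • Matrix.diagonal (a q))]
    simp only [← hd]
    ext i j
    simp [Matrix.sum_apply, -Matrix.submatrix_diagonal_equiv]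
  have hmp := measurePreserving_piCongrLeft (fun _ : ι => gaussianReal 0 1) φ.symm
  rw [← hmp.integral_comp']
  congr 1
  funext x
  rw [← aux_fG_submatrix e, hd]
  congr 1
  rw [← h1 x]
  congr 2
  funext q
  have := Equiv.piCongrLeft_apply_apply (fun _ : ι => ℝ) φ.symm x (φ q)
  simp only [Equiv.symm_apply_apply] at this
  exact this
end gibbsreal

section conv
variable {n : Type*} [Fintype n] [DecidableEq n]

theorem aux_trace_map (M : Matrix n n ℝ) :
    (M.map Complex.ofReal).trace = ((M.trace : ℝ) : ℂ) := by
  simp [Matrix.trace]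

theorem aux_map_mul (M M' : Matrix n n ℝ) :
    M.map Complex.ofReal * M'.map Complex.ofReal = (M * M').map Complex.ofReal :=
  (Matrix.map_mul (f := Complex.ofRealHom)).symm

theorem aux_gibbs {β : ℝ} {H : Matrix n n ℂ} {K : Matrix n n ℝ}
    (h : (-β) • H = K.map Complex.ofReal) (A : Matrix n n ℝ) :
    gibbs β H (A.map Complex.ofReal) = mG K A := by
  rw [gibbs, h, aux_exp_map, aux_map_mul, aux_trace_map, aux_trace_map, ← Complex.ofReal_div,
    Complex.ofReal_re, mG]

theorem aux_mG_lin {ι : Type*} [Fintype ι] (K : Matrix n n ℝ) (c : ℝ) (x : ι → ℝ)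
    (A : ι → Matrix n n ℝ) : mG K (c • ∑ p, x p • A p) = c * ∑ p, x p * mG K (A p) := by
  simp only [mG, Matrix.mul_smul, Matrix.mul_sum, Matrix.trace_smul, Matrix.trace_sum, smul_eq_mul]
  rw [mul_div_assoc, Finset.sum_div]
  simp only [mul_div_assoc]

theorem aux_duh {β : ℝ} {H : Matrix n n ℂ} {K : Matrix n n ℝ}
    (h : (-β) • H = K.map Complex.ofReal) (a : n → ℝ) :
    duhamel β H ((Matrix.diagonal a).map Complex.ofReal) ((Matrix.diagonal a).map Complex.ofReal)
      = dG K (Matrix.diagonal a) := by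
  have hs : ∀ t : ℝ, t • K.map Complex.ofReal = (t • K).map Complex.ofReal := by
    intro t; ext i j; simp
  have h1 : ∀ t : ℝ, (t * β) • H = ((-t) • K).map Complex.ofReal := by
    intro t
    rw [← hs, ← h, smul_smul]; congr 1; ring
  have h2 : ∀ t : ℝ, (-(t * β)) • H = (t • K).map Complex.ofReal := by
    intro t
    rw [← hs, ← h, smul_smul]; congr 1; ring
  have h3 : ((Matrix.diagonal a).map Complex.ofReal)ᴴ = (Matrix.diagonal a).map Complex.ofReal := by
    ext i j
    by_cases hij : i = j
    · subst hij; simp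
    · simp [hij, Ne.symm hij]
  have h4 : ∀ t : ℝ, NormedSpace.exp K * NormedSpace.exp ((-t) • K) = NormedSpace.exp ((1 - t) • K) := by
    intro t
    rw [← Matrix.exp_add_of_commute]
    · congr 1
      rw [sub_smul, one_smul, neg_smul, sub_eq_add_neg]
    · exact (Commute.refl K).smul_right _
  rw [duhamel, dG, ← intervalIntegral.integral_div]
  congr 1
  funext t
  rw [h1, h2, h3, aux_exp_map, aux_exp_map, aux_map_mul, aux_map_mul, aux_map_mul, aux_gibbs h, mG,
    ← mul_assoc, ← mul_assoc, ← mul_assoc, h4]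
end conv

abbrev PI (N : ℕ) := {q : Fin N × Fin N // q.1 < q.2}

def rz (N : ℕ) (j : Fin N) (σ : Conf N) : ℝ := if σ j = 0 then 1 else -1

def ra (N : ℕ) (p : PI N) (σ : Conf N) : ℝ := rz N p.1.1 σ * rz N p.1.2 σ

def rx (N : ℕ) (j : Fin N) : Matrix (Conf N) (Conf N) ℝ :=
  Matrix.of fun σ τ => if τ = Function.update σ j (1 - σ j) then 1 else 0

def rB (N : ℕ) (c : ℝ) : Matrix (Conf N) (Conf N) ℝ := c • ∑ j, rx N j

theorem aux_rz_abs (N : ℕ) (j : Fin N) (σ : Conf N) : |rz N j σ| = 1 := by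
  unfold rz; split_ifs <;> simp

theorem aux_ra_abs (N : ℕ) (p : PI N) (σ : Conf N) : |ra N p σ| ≤ 1 := by
  rw [ra, abs_mul, aux_rz_abs, aux_rz_abs]; simp

theorem aux_rB_nonneg (N : ℕ) {c : ℝ} (hc : 0 ≤ c) (σ τ : Conf N) : 0 ≤ rB N c σ τ := by
  rw [rB, Matrix.smul_apply, Matrix.sum_apply]
  refine mul_nonneg hc (Finset.sum_nonneg fun j _ => ?_)
  simp only [rx, Matrix.of_apply]
  split_ifs <;> simp

theorem aux_SzSz (N : ℕ) (j k : Fin N) :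
    Sz N j * Sz N k = (Matrix.diagonal fun σ => rz N j σ * rz N k σ).map Complex.ofReal := by
  rw [Sz, Sz, Matrix.diagonal_mul_diagonal, Matrix.diagonal_map (by simp)]
  congr 1
  funext σ
  simp only [rz]
  split_ifs <;> simp

theorem aux_sum_PI {M : Type*} [AddCommMonoid M] (N : ℕ) (f : Fin N → Fin N → M) :
    (∑ j : Fin N, ∑ k : Fin N, if j < k then f j k else 0) = ∑ p : PI N, f p.1.1 p.1.2 := by
  rw [← Finset.sum_product', ← Finset.sum_filter]
  exact Finset.sum_subtype _ (by simp) (fun q : Fin N × Fin N => f q.1 q.2)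

def gx {N : ℕ} (g : Fin N → Fin N → ℝ) (p : PI N) : ℝ := g p.1.1 p.1.2

theorem aux_UN (N : ℕ) (g : Fin N → Fin N → ℝ) :
    UN N g = ((-(1 / Real.sqrt N)) • ∑ p : PI N, gx g p • Matrix.diagonal (ra N p)).map Complex.ofReal := by
  rw [UN, aux_sum_PI N (fun j k => g j k • (Sz N j * Sz N k))]
  ext σ τ
  simp only [aux_SzSz, Matrix.smul_apply, Matrix.sum_apply, Matrix.map_apply, Complex.real_smul, smul_eq_mul]
  push_cast
  rfl

theorem aux_HN (N : ℕ) (β J b : ℝ) (g : Fin N → Fin N → ℝ) :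
    (-β) • HN N J b g = (kG (rB N (β * b)) (β * J / Real.sqrt N) (ra N) (gx g)).map Complex.ofReal := by
  have hx : ∀ j, Sx N j = (rx N j).map Complex.ofReal := by
    intro j; ext σ τ; simp only [Sx, rx, Matrix.of_apply, Matrix.map_apply]; split_ifs <;> simp
  rw [HN, aux_UN, kG, rB]
  simp only [hx]
  ext σ τ
  simp only [Matrix.smul_apply, Matrix.sub_apply, Matrix.add_apply, Matrix.sum_apply, Matrix.map_apply,
    Complex.real_smul, smul_eq_mul]
  push_cast
  simp only [mul_assoc, ← Finset.mul_sum]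
  ring_nf

theorem aux_card (N : ℕ) : (Fintype.card (PI N) : ℝ) = N * (N - 1) / 2 := by
  have h1 : Fintype.card (PI N) = ∑ i ∈ Finset.range N, i := by
    have := aux_sum_PI N (fun _ _ => 1)
    simp only [Finset.sum_const, smul_eq_mul, mul_one, Finset.card_univ] at this
    rw [← this, Finset.sum_comm, ← Fin.sum_univ_eq_sum_range (fun i => i)]
    refine Finset.sum_congr rfl fun k _ => ?_
    rw [← Finset.sum_filter, Finset.sum_const, smul_eq_mul, mul_one, Finset.filter_gt_eq_Iio, Fin.card_Iio]
  have h2 := Finset.sum_range_id_mul_two N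
  rw [← h1] at h2
  rcases N with _ | N
  · have : Fintype.card (PI 0) = 0 := by omega
    simp [this]
  · have h3 : ((Fintype.card (PI (N+1)) * 2 : ℕ) : ℝ) = ((N + 1) * N : ℕ) := by rw [h2]; simp
    push_cast at h3 ⊢
    linarith

/-- action on pairs -/
def pmap {N : ℕ} (π : Equiv.Perm (Fin N)) (p : PI N) : PI N :=
  if h : π p.1.1 < π p.1.2 then ⟨(π p.1.1, π p.1.2), h⟩
  else ⟨(π p.1.2, π p.1.1), lt_of_le_of_ne (not_lt.1 h) (fun h' => p.2.ne' (π.injective h'))⟩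

theorem aux_pmap_inv {N : ℕ} (π : Equiv.Perm (Fin N)) (p : PI N) : pmap π.symm (pmap π p) = p := by
  obtain ⟨⟨j, k⟩, h⟩ := p
  have h : j < k := h
  by_cases h1 : π j < π k
  · simp [pmap, h1, h]
  · simp [pmap, h1, h, not_lt.2 h.le]

def pequiv {N : ℕ} (π : Equiv.Perm (Fin N)) : PI N ≃ PI N where
  toFun := pmap π
  invFun := pmap π.symm
  left_inv := aux_pmap_inv π
  right_inv := fun p => by simpa using aux_pmap_inv π.symm p

def cequiv {N : ℕ} (π : Equiv.Perm (Fin N)) : Conf N ≃ Conf N := Equiv.arrowCongr π.symm (Equiv.refl _)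

theorem aux_cequiv {N : ℕ} (π : Equiv.Perm (Fin N)) (σ : Conf N) (j : Fin N) :
    cequiv π σ j = σ (π j) := by simp [cequiv]

theorem aux_ra_equiv {N : ℕ} (π : Equiv.Perm (Fin N)) (p : PI N) (σ : Conf N) :
    ra N (pequiv π p) σ = ra N p (cequiv π σ) := by
  have h : pequiv π p = pmap π p := rfl
  rw [h, pmap]
  split_ifs with h1
  · simp [ra, rz, aux_cequiv]
  · simp only [ra, rz, aux_cequiv]; exact mul_comm _ _

theorem aux_rB_equiv {N : ℕ} (π : Equiv.Perm (Fin N)) (c : ℝ) :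
    (rB N c).submatrix (cequiv π) (cequiv π) = rB N c := by
  ext σ τ
  simp only [rB, Matrix.submatrix_apply, Matrix.smul_apply, Matrix.sum_apply]
  congr 1
  rw [← Equiv.sum_comp π (fun j => rx N j σ τ)]
  refine Finset.sum_congr rfl fun j _ => ?_
  simp only [rx, Matrix.of_apply, aux_cequiv]
  have : cequiv π τ = Function.update (cequiv π σ) j (1 - σ (π j)) ↔
      τ = Function.update σ (π j) (1 - σ (π j)) := by
    have h : Function.update (cequiv π σ) j (1 - σ (π j)) =
        cequiv π (Function.update σ (π j) (1 - σ (π j))) := by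
      funext k
      rw [aux_cequiv]
      by_cases hk : k = j
      · subst hk; simp
      · rw [Function.update_of_ne hk, Function.update_of_ne (fun h => hk (π.injective h)), aux_cequiv]
    rw [h, (cequiv π).injective.eq_iff]
  exact if_congr this rfl rfl

theorem aux_perm {N : ℕ} (p q : PI N) : ∃ π : Equiv.Perm (Fin N), pequiv π p = q := by
  obtain ⟨⟨j, k⟩, h⟩ := p
  obtain ⟨⟨j', k'⟩, h'⟩ := q
  have h : j < k := h
  have h' : j' < k' := h'
  let π := (Equiv.swap j j').trans (Equiv.swap (Equiv.swap j j' k) k')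
  have h1 : π j = j' := by
    simp only [π, Equiv.trans_apply, Equiv.swap_apply_left]
    refine Equiv.swap_apply_of_ne_of_ne ?_ h'.ne
    intro he
    have : Equiv.swap j j' j = Equiv.swap j j' k := by rw [Equiv.swap_apply_left]; exact he
    exact h.ne ((Equiv.swap j j').injective this)
  have h2 : π k = k' := by simp [π]
  refine ⟨π, ?_⟩
  change pmap π _ = _
  simp [pmap, h1, h2, h']

theorem aux_main_pi (N : ℕ) (c b : ℝ) (hb : 0 ≤ b) (p₀ : PI N) :
    ∫ x : PI N → ℝ, (∑ p, x p * mG (kG (rB N b) c (ra N) x) (Matrix.diagonal (ra N p))) ∂(gpi (PI N))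
      = N * (N - 1) / 2 * c * ∫ x, fG (kG (rB N b) c (ra N) x) (Matrix.diagonal (ra N p₀)) ∂(gpi (PI N)) := by
  have hB : ∀ i j, i ≠ j → 0 ≤ rB N b i j := fun i j _ => aux_rB_nonneg N hb i j
  rw [integral_finsetSum _ fun p _ => aux_int_xm hB c (ra N) (aux_ra_abs N) p]
  have : ∀ p, ∫ x : PI N → ℝ, x p * mG (kG (rB N b) c (ra N) x) (Matrix.diagonal (ra N p)) ∂(gpi (PI N))
      = c * ∫ x, fG (kG (rB N b) c (ra N) x) (Matrix.diagonal (ra N p₀)) ∂(gpi (PI N)) := by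
    intro p
    rw [aux_ibp hB c (ra N) (aux_ra_abs N) p]
    obtain ⟨π, rfl⟩ := aux_perm p₀ p
    rw [aux_symm (rB N b) c (ra N) (cequiv π) (pequiv π) (aux_rB_equiv π b)
      (aux_ra_equiv π) p₀]
  simp only [this, Finset.sum_const, Finset.card_univ, nsmul_eq_mul, aux_card]
  ring

theorem stmt1
    {Ω : Type*} [MeasurableSpace Ω] (μ : Measure Ω) [IsProbabilityMeasure μ]
    (N : ℕ) (hN : 2 ≤ N) (β J b : ℝ) (hβ : 0 < β) (hJ : 0 < J) (hb : 0 ≤ b)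
    (g : Ω → Fin N → Fin N → ℝ)
    (hmeas : ∀ j k : Fin N, Measurable fun ω => g ω j k)
    (hgauss : ∀ j k : Fin N, j < k →
      Measure.map (fun ω => g ω j k) μ = gaussianReal 0 1)
    (hindep : iIndepFun
      (fun (p : {q : Fin N × Fin N // q.1 < q.2}) ω => g ω p.1.1 p.1.2) μ) :
    -(2 / ((N : ℝ) - 1)) * (∫ ω, gibbs β (HN N J b (g ω)) (UN N (g ω)) ∂μ)
      = β * J * ∫ ω,
          (duhamel β (HN N J b (g ω))
              (Sz N ⟨0, by omega⟩ * Sz N ⟨1, by omega⟩)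
              (Sz N ⟨0, by omega⟩ * Sz N ⟨1, by omega⟩)
            - (gibbs β (HN N J b (g ω)) (Sz N ⟨0, by omega⟩ * Sz N ⟨1, by omega⟩)) ^ 2) ∂μ := by
  set p₀ : PI N := ⟨(⟨0, by omega⟩, ⟨1, by omega⟩), by simp [Fin.lt_def]⟩ with hp₀
  have hA : Sz N ⟨0, by omega⟩ * Sz N ⟨1, by omega⟩ = (Matrix.diagonal (ra N p₀)).map Complex.ofReal :=
    aux_SzSz N _ _
  have hX : Measurable fun ω => gx (g ω) := by
    rw [measurable_pi_iff]; intro p; exact hmeas _ _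
  have hlaw : Measure.map (fun ω => gx (g ω)) μ = gpi (PI N) := by
    have := (iIndepFun_iff_map_fun_eq_pi_map (fun p : PI N => (hmeas p.1.1 p.1.2).aemeasurable)).1 hindep
    refine this.trans ?_
    congr 1
    funext p
    exact hgauss _ _ p.2
  set c := β * J / Real.sqrt N with hc
  have hbb : 0 ≤ β * b := by positivity
  have hB : ∀ i j, i ≠ j → 0 ≤ rB N (β * b) i j := fun i j _ => aux_rB_nonneg N hbb i j
  have hL : ∀ ω, gibbs β (HN N J b (g ω)) (UN N (g ω)) = -(1 / Real.sqrt N) *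
      ∑ p, gx (g ω) p * mG (kG (rB N (β * b)) c (ra N) (gx (g ω))) (Matrix.diagonal (ra N p)) := by
    intro ω
    rw [aux_UN, aux_gibbs (aux_HN N β J b (g ω)), aux_mG_lin]
  have hR : ∀ ω, duhamel β (HN N J b (g ω))
              (Sz N ⟨0, by omega⟩ * Sz N ⟨1, by omega⟩)
              (Sz N ⟨0, by omega⟩ * Sz N ⟨1, by omega⟩)
            - (gibbs β (HN N J b (g ω)) (Sz N ⟨0, by omega⟩ * Sz N ⟨1, by omega⟩)) ^ 2
      = fG (kG (rB N (β * b)) c (ra N) (gx (g ω))) (Matrix.diagonal (ra N p₀)) := by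
    intro ω
    rw [hA, aux_duh (aux_HN N β J b (g ω)), aux_gibbs (aux_HN N β J b (g ω))]
    rfl
  simp only [hL, hR]
  have e1 := integral_map (μ := μ) hX.aemeasurable (f := fun x : PI N → ℝ =>
    ∑ p, x p * mG (kG (rB N (β * b)) c (ra N) x) (Matrix.diagonal (ra N p))) (by
      rw [hlaw]
      exact (integrable_finset_sum _ fun p _ =>
        aux_int_xm hB c (ra N) (aux_ra_abs N) p).aestronglyMeasurable)
  have e2 := integral_map (μ := μ) hX.aemeasurable (f := fun x : PI N → ℝ =>
    fG (kG (rB N (β * b)) c (ra N) x) (Matrix.diagonal (ra N p₀))) (by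
      rw [hlaw]
      exact (aux_int_fG hB c (ra N) (aux_ra_abs N) p₀).aestronglyMeasurable)
  rw [hlaw] at e1 e2
  rw [integral_const_mul, ← e1, ← e2, aux_main_pi N c (β * b) hbb p₀, hc]
  have hN0 : (2:ℝ) ≤ N := by exact_mod_cast hN
  have hs : Real.sqrt N ≠ 0 := (Real.sqrt_pos.2 (by linarith)).ne'
  have hs2 : Real.sqrt N ^ 2 = N := Real.sq_sqrt (by linarith)
  have hN1 : (N:ℝ) - 1 ≠ 0 := by linarith
  generalize ∫ x, fG (kG (rB N (β * b)) (β * J / Real.sqrt N) (ra N) x)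
    (Matrix.diagonal (ra N p₀)) ∂(gpi (PI N)) = I
  field_simp
  rw [hs2]
end
end

section
/- For every N ≥ 2, β > 0, J > 0, b ≥ 0 and every realization of the disorder, the transverse magnetization of the quantum Sherrington–Kirkpatrick model satisfies 0 ≤ ⟨S_1^x⟩ ≤ tanh(βb). -/
open Matrix MeasureTheory ProbabilityTheory

noncomputable section

open NormedSpace in
lemma herm_diag {n : Type*} [Fintype n] [DecidableEq n] {A : Matrix n n ℂ} (hA : A.IsHermitian) :
    ∃ (U : Matrix n n ℂ) (l : n → ℝ), U * Uᴴ = 1 ∧ Uᴴ * U = 1 ∧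
      A = U * diagonal (fun i => (l i : ℂ)) * Uᴴ ∧
      NormedSpace.exp A = U * diagonal (fun i => (Real.exp (l i) : ℂ)) * Uᴴ := by
  have h1 : (hA.eigenvectorUnitary : Matrix n n ℂ) * (hA.eigenvectorUnitary : Matrix n n ℂ)ᴴ = 1 :=
    Unitary.coe_mul_star_self hA.eigenvectorUnitary
  have h2 : (hA.eigenvectorUnitary : Matrix n n ℂ)ᴴ * (hA.eigenvectorUnitary : Matrix n n ℂ) = 1 :=
    Unitary.coe_star_mul_self hA.eigenvectorUnitary
  have h3 : A = (hA.eigenvectorUnitary : Matrix n n ℂ) *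
      diagonal (fun i => (hA.eigenvalues i : ℂ)) * (hA.eigenvectorUnitary : Matrix n n ℂ)ᴴ := by
    have := hA.spectral_theorem
    rw [Unitary.conjStarAlgAut_apply] at this
    exact this
  refine ⟨hA.eigenvectorUnitary, hA.eigenvalues, h1, h2, h3, ?_⟩
  generalize (hA.eigenvectorUnitary : Matrix n n ℂ) = U at *
  generalize hA.eigenvalues = l at *
  have hinv : U⁻¹ = Uᴴ := Matrix.inv_eq_left_inv h2
  have hU : IsUnit U := ⟨⟨U, Uᴴ, h1, h2⟩, rfl⟩
  rw [h3, ← hinv, Matrix.exp_conj _ _ hU, Matrix.exp_diagonal]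
  congr 3
  funext i
  rw [Pi.coe_exp, ← Complex.exp_eq_exp_ℂ, Complex.ofReal_exp]

lemma tr1 {n : Type*} [Fintype n] [DecidableEq n] (U V M1 M2 : Matrix n n ℂ) (p : n → ℂ)
    (hV : V * Vᴴ = 1) :
    (U * diagonal p * Uᴴ * (M1 * M2)).trace =
      ∑ j, ∑ k, p j * ((Uᴴ * M1 * V) j k * star ((Uᴴ * M2ᴴ * V) j k)) := by
  have : (U * diagonal p * Uᴴ * (M1 * M2)).trace =
      (diagonal p * ((Uᴴ * M1 * V) * (Uᴴ * M2ᴴ * V)ᴴ)).trace := by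
    have e : (Uᴴ * M1 * V) * (Uᴴ * M2ᴴ * V)ᴴ = Uᴴ * (M1 * M2) * U := by
      simp only [conjTranspose_mul, conjTranspose_conjTranspose]
      calc _ = Uᴴ * M1 * (V * Vᴴ) * M2 * U := by simp only [Matrix.mul_assoc]
        _ = _ := by rw [hV]; simp only [Matrix.mul_assoc, Matrix.mul_one, Matrix.one_mul]
    rw [e, Matrix.mul_assoc, Matrix.mul_assoc, Matrix.trace_mul_comm]
    simp only [Matrix.mul_assoc]
  rw [this]
  simp only [trace, diag_apply, diagonal_mul]
  simp only [mul_apply, conjTranspose_apply, Finset.mul_sum]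

lemma tr2 {n : Type*} [Fintype n] [DecidableEq n] (U V M1 M2 : Matrix n n ℂ) (q : n → ℂ)
    (hU : U * Uᴴ = 1) :
    (V * diagonal q * Vᴴ * (M2 * M1)).trace =
      ∑ j, ∑ k, q k * ((Uᴴ * M1 * V) j k * star ((Uᴴ * M2ᴴ * V) j k)) := by
  rw [tr1 V U M2 M1 q hU, Finset.sum_comm]
  refine Finset.sum_congr rfl fun j _ => Finset.sum_congr rfl fun k _ => ?_
  have h1 : ∀ M : Matrix n n ℂ, (Vᴴ * M * U) k j = star ((Uᴴ * Mᴴ * V) j k) := by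
    intro M
    rw [← conjTranspose_apply]
    simp only [conjTranspose_mul, conjTranspose_conjTranspose, Matrix.mul_assoc]
  have h2 := h1 M2
  have h3 := h1 M1ᴴ
  rw [conjTranspose_conjTranspose] at h3
  rw [h2, h3, star_star]
  ring

lemma exp_ineq_aux {x : ℝ} (hx : 0 ≤ x) : Real.exp x - 1 ≤ x * ((Real.exp x + 1) / 2) := by
  have key : MonotoneOn (fun x : ℝ => x * ((Real.exp x + 1) / 2) - Real.exp x) (Set.Ici 0) := by
    have hd : ∀ x : ℝ, HasDerivAt (fun x : ℝ => x * ((Real.exp x + 1) / 2) - Real.exp x)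
        (1 * ((Real.exp x + 1) / 2) + x * (Real.exp x / 2) - Real.exp x) x := fun x =>
      ((hasDerivAt_id x).mul (((Real.hasDerivAt_exp x).add_const 1).div_const 2)).sub
        (Real.hasDerivAt_exp x)
    refine monotoneOn_of_deriv_nonneg (convex_Ici 0)
      (fun x _ => (hd x).continuousAt.continuousWithinAt)
      (fun x _ => (hd x).differentiableAt.differentiableWithinAt) ?_
    intro x _
    rw [(hd x).deriv]
    have h1 := Real.add_one_le_exp (-x)
    have h2 : Real.exp x * Real.exp (-x) = 1 := by rw [← Real.exp_add]; simp
    nlinarith [Real.exp_pos x]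
  have := key (Set.mem_Ici.2 le_rfl) (Set.mem_Ici.2 hx) hx
  simp at this
  linarith

lemma exp_ineq {a b : ℝ} (h : b ≤ a) :
    Real.exp a - Real.exp b ≤ (a - b) * ((Real.exp a + Real.exp b) / 2) := by
  have h1 := exp_ineq_aux (sub_nonneg.2 h)
  have h2 : Real.exp a = Real.exp b * Real.exp (a - b) := by rw [← Real.exp_add]; ring_nf
  rw [h2]
  nlinarith [Real.exp_pos b]

lemma scalar_ineq (a b d : ℝ) (hd : 0 < d) (w t : ℂ) (h : ((a : ℂ) - b) * w = d * t) :
    ((Real.exp a : ℂ) * (w * star t)).re - ((Real.exp b : ℂ) * (w * star t)).re ≤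
      d / 2 * (((Real.exp a : ℂ) * (t * star t)).re + ((Real.exp b : ℂ) * (t * star t)).re) := by
  have ht : t = ((a - b) / d : ℝ) * w := by
    have : (d : ℂ) ≠ 0 := by exact_mod_cast hd.ne'
    push_cast
    field_simp
    linear_combination -h
  have e1 : w * star t = (((a - b) / d * Complex.normSq w : ℝ) : ℂ) := by
    rw [ht, star_mul', Complex.star_def, Complex.conj_ofReal]
    push_cast
    rw [← Complex.mul_conj]; ring
  have e2 : t * star t = (((a - b) / d * ((a - b) / d * Complex.normSq w) : ℝ) : ℂ) := by
    rw [mul_comm, ht, star_mul', Complex.star_def, Complex.conj_ofReal]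
    push_cast
    rw [← Complex.mul_conj]; ring
  rw [e1, e2]
  simp only [← Complex.ofReal_mul, Complex.ofReal_re]
  have hw := Complex.normSq_nonneg w
  have key : (a - b) * (Real.exp a - Real.exp b) ≤
      (a - b) * ((a - b) * ((Real.exp a + Real.exp b) / 2)) := by
    rcases le_total b a with hab | hab
    · exact mul_le_mul_of_nonneg_left (exp_ineq hab) (sub_nonneg.2 hab)
    · have := exp_ineq hab
      exact mul_le_mul_of_nonpos_left (by linarith) (sub_nonpos.2 hab)
  have k2 := mul_le_mul_of_nonneg_right key (div_nonneg hw hd.le)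
  calc _ = (a - b) * (Real.exp a - Real.exp b) * (Complex.normSq w / d) := by field_simp
    _ ≤ _ := k2
    _ = _ := by field_simp

lemma scalar_ineq2 (a b d : ℝ) (w t : ℂ) (h : ((a : ℂ) - b) * w = d * t) :
    d * ((Real.exp b : ℂ) * (w * star t)).re ≤
      ((Real.exp a : ℂ) * (w * star w)).re - ((Real.exp b : ℂ) * (w * star w)).re := by
  have e0 : (d : ℂ) * (w * star t) = (((a - b) * Complex.normSq w : ℝ) : ℂ) := by
    have h' := congrArg star h
    rw [star_mul', star_mul', Complex.star_def, map_sub,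
      Complex.conj_ofReal, Complex.conj_ofReal, Complex.conj_ofReal] at h'
    push_cast
    rw [← Complex.mul_conj, Complex.star_def]
    linear_combination -w * h'
  have e1 : d * ((Real.exp b : ℂ) * (w * star t)).re =
      ((Real.exp b : ℂ) * ((d : ℂ) * (w * star t))).re := by
    rw [← Complex.re_ofReal_mul, mul_left_comm]
  have e2 : w * star w = ((Complex.normSq w : ℝ) : ℂ) := Complex.mul_conj w
  rw [e1, e0, e2]
  simp only [← Complex.ofReal_mul, Complex.ofReal_re]
  have hw := Complex.normSq_nonneg w
  have h1 := Real.add_one_le_exp (a - b)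
  have h2 : Real.exp a = Real.exp b * Real.exp (a - b) := by rw [← Real.exp_add]; ring_nf
  have h3 : Real.exp b * (a - b) ≤ Real.exp a - Real.exp b := by
    rw [h2]; nlinarith [Real.exp_pos b]
  nlinarith [mul_le_mul_of_nonneg_right h3 hw]

lemma main_ineqs {n : Type*} [Fintype n] [DecidableEq n] {A B S : Matrix n n ℂ}
    (hA : A.IsHermitian) (hB : B.IsHermitian) (hS : S.IsHermitian) (hSS : S * S = 1)
    (d : ℝ) (hd : A - B = d • S) :
    (0 < d → (NormedSpace.exp A * S).trace.re - (NormedSpace.exp B * S).trace.re ≤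
      d / 2 * ((NormedSpace.exp A).trace.re + (NormedSpace.exp B).trace.re)) ∧
    d * (NormedSpace.exp B * S).trace.re ≤
      (NormedSpace.exp A).trace.re - (NormedSpace.exp B).trace.re := by
  obtain ⟨U, l, hU, hU', eA, xA⟩ := herm_diag hA
  obtain ⟨V, m, hV, hV', eB, xB⟩ := herm_diag hB
  have rel : ∀ j k, ((l j : ℂ) - m k) * (Uᴴ * (1 : Matrix n n ℂ) * V) j k = d * (Uᴴ * S * V) j k := by
    intro j k
    have h1 : Uᴴ * (A - B) * V =
        diagonal (fun i => (l i : ℂ)) * (Uᴴ * (1 : Matrix n n ℂ) * V) - (Uᴴ * (1 : Matrix n n ℂ) * V) * diagonal (fun i => (m i : ℂ)) := by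
      rw [Matrix.mul_sub, Matrix.sub_mul, Matrix.mul_one]
      congr 1
      · rw [eA]
        calc _ = (Uᴴ * U) * diagonal (fun i => (l i : ℂ)) * Uᴴ * V := by simp only [Matrix.mul_assoc]
          _ = _ := by rw [hU', Matrix.one_mul, Matrix.mul_assoc]
      · rw [eB]
        calc _ = Uᴴ * V * diagonal (fun i => (m i : ℂ)) * (Vᴴ * V) := by simp only [Matrix.mul_assoc]
          _ = _ := by rw [hV', Matrix.mul_one]
    have h2 := congrFun (congrFun h1 j) k
    rw [hd, Matrix.sub_apply, diagonal_mul, mul_diagonal, Matrix.mul_smul, Matrix.smul_mul, Matrix.smul_apply,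
      Complex.real_smul] at h2
    rw [h2]; ring
  have hS' : Sᴴ = S := hS
  have a1 := tr1 U V 1 S (fun i => (Real.exp (l i) : ℂ)) hV
  have a2 := tr2 U V 1 S (fun i => (Real.exp (m i) : ℂ)) hU
  have a3 := tr1 U V S S (fun i => (Real.exp (l i) : ℂ)) hV
  have a4 := tr2 U V S S (fun i => (Real.exp (m i) : ℂ)) hU
  have a5 := tr1 U V 1 1 (fun i => (Real.exp (l i) : ℂ)) hV
  have a6 := tr2 U V 1 1 (fun i => (Real.exp (m i) : ℂ)) hU
  rw [← xA] at a1 a3 a5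
  rw [← xB] at a2 a4 a6
  simp only [hSS, hS', Matrix.one_mul, Matrix.mul_one, conjTranspose_one] at a1 a2 a3 a4 a5 a6
  simp only [Matrix.mul_one] at rel
  constructor
  · intro hdp
    rw [a1, a2, a3, a4]
    simp only [Matrix.mul_one, Complex.re_sum, ← Finset.sum_sub_distrib, ← Finset.sum_add_distrib,
      Finset.mul_sum]
    exact Finset.sum_le_sum fun j _ => Finset.sum_le_sum fun k _ =>
      scalar_ineq _ _ _ hdp _ _ (rel j k)
  · rw [a2, a5, a6]
    simp only [Matrix.mul_one, Complex.re_sum, ← Finset.sum_sub_distrib, Finset.mul_sum]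
    exact Finset.sum_le_sum fun j _ => Finset.sum_le_sum fun k _ =>
      scalar_ineq2 _ _ _ _ _ (rel j k)

lemma trace_exp_pos {n : Type*} [Fintype n] [DecidableEq n] [Nonempty n] {A : Matrix n n ℂ}
    (hA : A.IsHermitian) :
    (NormedSpace.exp A).trace.im = 0 ∧ 0 < (NormedSpace.exp A).trace.re := by
  obtain ⟨U, l, hU, hU', eA, xA⟩ := herm_diag hA
  have : (NormedSpace.exp A).trace = ((∑ i, Real.exp (l i) : ℝ) : ℂ) := by
    rw [xA, Matrix.mul_assoc, Matrix.trace_mul_comm, Matrix.mul_assoc, hU', Matrix.mul_one,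
      trace_diagonal]
    push_cast; rfl
  rw [this]
  refine ⟨Complex.ofReal_im _, ?_⟩
  rw [Complex.ofReal_re]
  exact Finset.sum_pos (fun i _ => Real.exp_pos _) Finset.univ_nonempty

section
attribute [local instance] Matrix.linftyOpNormedRing Matrix.linftyOpNormedAlgebra

lemma diff_exp {n : Type*} [Fintype n] [DecidableEq n] (B S M : Matrix n n ℂ) :
    Differentiable ℝ (fun s : ℝ => (NormedSpace.exp (B + s • S) * M).trace.re) := by
  have h1 : Differentiable ℝ (fun s : ℝ => NormedSpace.exp (B + s • S)) := by
    intro s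
    have ha : DifferentiableAt ℝ (NormedSpace.exp : Matrix n n ℂ → Matrix n n ℂ) (B + s • S) :=
      (NormedSpace.exp_analytic (𝕂 := ℝ) (B + s • S)).differentiableAt
    have hb : DifferentiableAt ℝ (fun s : ℝ => B + s • S) s := by fun_prop
    exact ha.comp s hb
  let L : Matrix n n ℂ →ₗ[ℝ] ℝ :=
    { toFun := fun X => (X * M).trace.re
      map_add' := by intro X Y; simp [Matrix.add_mul]
      map_smul' := by intro c X; simp }
  have h2 : Differentiable ℝ L := (LinearMap.toContinuousLinearMap L).differentiable
  exact h2.comp h1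
end

lemma abstract_bound {n : Type*} [Fintype n] [DecidableEq n] {B S Z : Matrix n n ℂ}
    (hB : B.IsHermitian) (hS : S.IsHermitian) (hSS : S * S = 1)
    (hZZ : Z * Z = 1) (hZB : Commute Z B) (hZS : Z * S * Z = -S) (s : ℝ) (hs : 0 ≤ s) :
    0 ≤ (NormedSpace.exp (B + s • S) * S).trace.re ∧
    (NormedSpace.exp (B + s • S) * S).trace.re * Real.cosh s ≤
      (NormedSpace.exp (B + s • S)).trace.re * Real.sinh s := by
  set f : ℝ → ℝ := fun s => (NormedSpace.exp (B + s • S)).trace.re with hf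
  set g : ℝ → ℝ := fun s => (NormedSpace.exp (B + s • S) * S).trace.re with hg
  have hH : ∀ s : ℝ, (B + s • S).IsHermitian := by
    intro s
    refine hB.add ?_
    rw [IsHermitian, conjTranspose_smul, hS]; simp
  have hsub : ∀ s t : ℝ, (B + t • S) - (B + s • S) = (t - s) • S := by
    intro s t; rw [sub_smul]; abel
  have I1 : ∀ s t : ℝ, s < t → g t - g s ≤ (t - s) / 2 * (f t + f s) := fun s t h =>
    (main_ineqs (hH t) (hH s) hS hSS _ (hsub s t)).1 (sub_pos.2 h)
  have I2 : ∀ s t : ℝ, (t - s) * g s ≤ f t - f s := fun s t =>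
    (main_ineqs (hH t) (hH s) hS hSS _ (hsub s t)).2
  have df : Differentiable ℝ f := by simpa using diff_exp B S 1
  have dg : Differentiable ℝ g := diff_exp B S S
  have g0 : g 0 = 0 := by
    have hc : Z * NormedSpace.exp B = NormedSpace.exp B * Z := hZB.exp_right
    have : (NormedSpace.exp B * S).trace = -(NormedSpace.exp B * S).trace := by
      calc (NormedSpace.exp B * S).trace = (Z * Z * (NormedSpace.exp B * S)).trace := by
            rw [hZZ, Matrix.one_mul]
        _ = (Z * (NormedSpace.exp B * S) * Z).trace := by
            rw [Matrix.mul_assoc, Matrix.trace_mul_comm]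
        _ = (NormedSpace.exp B * (Z * S * Z)).trace := by
            rw [← Matrix.mul_assoc Z, hc]; simp only [Matrix.mul_assoc]
        _ = _ := by rw [hZS]; simp
    have h2 := congrArg Complex.re this
    simp only [hg, zero_smul, add_zero]
    rw [Complex.neg_re] at h2
    linarith
  have hf' : ∀ s, deriv f s = g s := by
    intro s
    have hd : HasDerivAt (fun t => f t - f s - (t - s) * g s) (deriv f s - 1 * g s) s :=
      ((df s).hasDerivAt.sub_const _).sub (((hasDerivAt_id s).sub_const s).mul_const (g s))
    have hmin : IsLocalMin (fun t => f t - f s - (t - s) * g s) s := by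
      refine Filter.Eventually.of_forall fun t => ?_
      have := I2 s t
      simp only [sub_self, zero_mul]
      linarith
    have := hmin.hasDerivAt_eq_zero hd
    linarith
  have hg' : ∀ s, deriv g s ≤ f s := by
    intro s
    have h1 : Filter.Tendsto (slope g s) (nhdsWithin s (Set.Ioi s)) (nhds (deriv g s)) :=
      (hasDerivAt_iff_tendsto_slope.1 (dg s).hasDerivAt).mono_left
        (nhdsWithin_mono _ fun x hx => ne_of_gt hx)
    have h2 : Filter.Tendsto (fun t => (f t + f s) / 2) (nhdsWithin s (Set.Ioi s))
        (nhds ((f s + f s) / 2)) :=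
      (((df s).continuousAt.add continuousAt_const).div_const 2).tendsto.mono_left
        nhdsWithin_le_nhds
    have h3 := le_of_tendsto_of_tendsto h1 h2 (by
      filter_upwards [self_mem_nhdsWithin] with t ht
      have ht' : 0 < t - s := sub_pos.2 ht
      rw [slope_def_field, div_le_iff₀ ht']
      have := I1 s t ht
      linarith)
    linarith
  refine ⟨?_, ?_⟩
  · rcases hs.eq_or_lt with h | h
    · rw [← h]; exact g0.ge
    · have h1 := I2 0 s
      have h2 := I2 s 0
      rw [g0] at h1
      have : 0 ≤ s * g s := by linarith
      exact nonneg_of_mul_nonneg_right this h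
  · have hD : ∀ x, HasDerivAt (fun x => g x * Real.cosh x - f x * Real.sinh x)
        ((deriv g x * Real.cosh x + g x * Real.sinh x) -
          (deriv f x * Real.sinh x + f x * Real.cosh x)) x := fun x =>
      ((dg x).hasDerivAt.mul (Real.hasDerivAt_cosh x)).sub
        ((df x).hasDerivAt.mul (Real.hasDerivAt_sinh x))
    have anti : Antitone (fun x => g x * Real.cosh x - f x * Real.sinh x) := by
      refine antitone_of_deriv_nonpos (fun x => (hD x).differentiableAt) fun x => ?_
      rw [(hD x).deriv, hf']
      nlinarith [hg' x, Real.cosh_pos x]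
    have := anti hs
    simp [g0] at this
    linarith

lemma flip_invol {N : ℕ} (j : Fin N) (σ τ : Conf N) :
    τ = Function.update σ j (1 - σ j) ↔ σ = Function.update τ j (1 - τ j) := by
  have : ∀ x : Fin 2, 1 - (1 - x) = x := by decide
  constructor
  · rintro rfl; simp [this]
  · rintro rfl; simp [this]

lemma Sx_herm (N : ℕ) (j : Fin N) : (Sx N j).IsHermitian := by
  ext σ τ
  simp only [conjTranspose_apply, Sx, of_apply, flip_invol j τ σ]
  split_ifs <;> simp

lemma Sx_sq (N : ℕ) (j : Fin N) : Sx N j * Sx N j = 1 := by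
  have : ∀ x : Fin 2, 1 - (1 - x) = x := by decide
  ext σ τ
  simp only [mul_apply, Sx, of_apply, ite_mul, one_mul, zero_mul, Finset.sum_ite_eq',
    Finset.sum_ite_eq, Finset.mem_univ, if_true, one_apply]
  simp [this, eq_comm]

lemma Sz_sq (N : ℕ) (j : Fin N) : Sz N j * Sz N j = 1 := by
  rw [Sz, diagonal_mul_diagonal, ← diagonal_one]
  congr 1; funext σ; split_ifs <;> simp

lemma Sz_Sx_Sz (N : ℕ) (j : Fin N) : Sz N j * Sx N j * Sz N j = - Sx N j := by
  have h2 : ∀ x : Fin 2, x = 0 ∨ x = 1 := by decide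
  ext σ τ
  simp only [Sz, Sx, mul_diagonal, diagonal_mul, of_apply, neg_apply]
  by_cases h : τ = Function.update σ j (1 - σ j)
  · subst h
    rcases h2 (σ j) with h | h <;> simp [h]
  · simp [h]

lemma Sz_comm_Sx (N : ℕ) (j k : Fin N) (hjk : j ≠ k) : Commute (Sz N j) (Sx N k) := by
  ext σ τ
  simp only [Sz, Sx, mul_diagonal, diagonal_mul, of_apply]
  by_cases h : τ = Function.update σ k (1 - σ k)
  · subst h
    simp [hjk]
  · simp [h]

lemma Sz_comm_Sz (N : ℕ) (j k : Fin N) : Commute (Sz N j) (Sz N k) := by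
  rw [Sz, Sz, Commute, SemiconjBy, diagonal_mul_diagonal, diagonal_mul_diagonal]
  congr 1; funext σ; ring

lemma Sz_herm (N : ℕ) (j : Fin N) : (Sz N j).IsHermitian := by
  rw [Sz, IsHermitian, diagonal_conjTranspose]
  congr 1; funext σ; simp only [Pi.star_apply]; split_ifs <;> simp

lemma herm_rsmul {n : Type*} (r : ℝ) {A : Matrix n n ℂ} (h : A.IsHermitian) :
    (r • A).IsHermitian := by
  rw [IsHermitian, conjTranspose_smul, h]; simp

lemma herm_sum {n ι : Type*} (s : Finset ι) (A : ι → Matrix n n ℂ)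
    (h : ∀ i ∈ s, (A i).IsHermitian) : (∑ i ∈ s, A i).IsHermitian := by
  rw [IsHermitian, conjTranspose_sum]
  exact Finset.sum_congr rfl h

lemma UN_herm (N : ℕ) (g : Fin N → Fin N → ℝ) : (UN N g).IsHermitian := by
  refine herm_rsmul _ (herm_sum _ _ fun j _ => herm_sum _ _ fun k _ => ?_)
  split_ifs
  · refine herm_rsmul _ ?_
    rw [IsHermitian, conjTranspose_mul, Sz_herm, Sz_herm]
    exact Sz_comm_Sz N k j
  · exact isHermitian_zero

lemma Sz_comm_UN (N : ℕ) (i : Fin N) (g : Fin N → Fin N → ℝ) : Commute (Sz N i) (UN N g) := by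
  refine Commute.smul_right (Commute.sum_right _ _ _ fun j _ => Commute.sum_right _ _ _ fun k _ => ?_) _
  split_ifs
  · exact ((Sz_comm_Sz N i j).mul_right (Sz_comm_Sz N i k)).smul_right _
  · exact Commute.zero_right _

theorem stmt9 (N : ℕ) (hN : 2 ≤ N) (β J b : ℝ) (hβ : 0 < β) (hJ : 0 < J) (hb : 0 ≤ b)
    (g : Fin N → Fin N → ℝ) :
    0 ≤ gibbs β (HN N J b g) (Sx N ⟨0, by omega⟩) ∧
    gibbs β (HN N J b g) (Sx N ⟨0, by omega⟩) ≤ Real.tanh (β * b) := by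
  set o : Fin N := ⟨0, by omega⟩ with ho
  let R : Matrix (Conf N) (Conf N) ℂ := ∑ j ∈ Finset.univ.erase o, Sx N j
  let B : Matrix (Conf N) (Conf N) ℂ := (-(β * J)) • UN N g + (β * b) • R
  have hsplit : (-β) • HN N J b g = B + (β * b) • Sx N o := by
    have : ∑ j : Fin N, Sx N j = Sx N o + R := (Finset.add_sum_erase _ _ (Finset.mem_univ o)).symm
    simp only [HN, B, this, smul_sub, smul_add, smul_smul, neg_mul, neg_smul]
    abel
  have hB : B.IsHermitian := (herm_rsmul _ (UN_herm N g)).add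
    (herm_rsmul _ (herm_sum _ _ fun j _ => Sx_herm N j))
  have hZB : Commute (Sz N o) B := ((Sz_comm_UN N o g).smul_right _).add_right
    ((Commute.sum_right _ _ _ fun j hj =>
      Sz_comm_Sx N o j (Finset.ne_of_mem_erase hj).symm).smul_right _)
  have hH : (B + (β * b) • Sx N o).IsHermitian := hB.add (herm_rsmul _ (Sx_herm N o))
  obtain ⟨h1, h2⟩ := abstract_bound hB (Sx_herm N o) (Sx_sq N o) (Sz_sq N o) hZB (Sz_Sx_Sz N o)
    (β * b) (by positivity)
  obtain ⟨him, hre⟩ := trace_exp_pos hH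
  have hgib : gibbs β (HN N J b g) (Sx N o) =
      (NormedSpace.exp (B + (β * b) • Sx N o) * Sx N o).trace.re /
        (NormedSpace.exp (B + (β * b) • Sx N o)).trace.re := by
    rw [gibbs, hsplit]
    have : (NormedSpace.exp (B + (β * b) • Sx N o)).trace =
        (((NormedSpace.exp (B + (β * b) • Sx N o)).trace.re : ℝ) : ℂ) :=
      Complex.ext (by simp) (by simp [him])
    rw [this, Complex.div_ofReal_re, Complex.ofReal_re]
  rw [hgib, Real.tanh_eq_sinh_div_cosh]
  refine ⟨div_nonneg h1 hre.le, ?_⟩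
  rw [div_le_div_iff₀ hre (Real.cosh_pos _)]
  linarith
end
end

section
/- In the zero-field case b = 0, for every N ≥ 2, β > 0 and J > 0, the disorder mean of the spin-glass order parameter satisfies the exact identity E[q_N] = 1 + (2/(βJ)) · (1/(N−1)) · E[⟨U_N⟩]. -/
open Matrix MeasureTheory ProbabilityTheory

noncomputable section

def qN (N : ℕ) (β J b : ℝ) (g : Fin N → Fin N → ℝ) : ℝ :=
  (2 / ((N : ℝ) * ((N : ℝ) - 1))) * ∑ j : Fin N, ∑ k : Fin N,
    if j < k then (gibbs β (HN N J b g) (Sz N j * Sz N k)) ^ 2 else 0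

lemma stein_one (f f' : ℝ → ℝ) (C : ℝ) (hd : ∀ x, HasDerivAt f (f' x) x)
    (hf' : Continuous f') (hb : ∀ x, |f x| ≤ C) (hb' : ∀ x, |f' x| ≤ C) :
    ∫ x, x * f x ∂(gaussianReal 0 1) = ∫ x, f' x ∂(gaussianReal 0 1) := by
  have hfc : Continuous f := continuous_iff_continuousAt.2 fun x => (hd x).continuousAt
  rw [integral_gaussianReal_eq_integral_smul one_ne_zero,
    integral_gaussianReal_eq_integral_smul one_ne_zero]
  have hpdf : ∀ x : ℝ, gaussianPDFReal 0 1 x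
      = (√(2 * Real.pi))⁻¹ * Real.exp (-(1/2) * x ^ 2) := by
    intro x
    simp only [gaussianPDFReal_def, NNReal.coe_one, sub_zero, mul_one]
    congr 2
    ring
  have hpd : ∀ x : ℝ, HasDerivAt (gaussianPDFReal 0 1) (-(x * gaussianPDFReal 0 1 x)) x := by
    intro x
    rw [show gaussianPDFReal 0 1 = fun x => (√(2 * Real.pi))⁻¹ * Real.exp (-(1/2) * x ^ 2) from
      funext hpdf]
    have h1 : HasDerivAt (fun x : ℝ => -(1/2) * x ^ 2) (-x) x := by
      have := (hasDerivAt_pow 2 x).const_mul (-(1/2) : ℝ)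
      refine this.congr_deriv ?_
      norm_num
      ring
    refine ((h1.exp).const_mul ((√(2 * Real.pi))⁻¹)).congr_deriv ?_
    ring
  have hip : Integrable (gaussianPDFReal 0 1) := integrable_gaussianPDFReal 0 1
  have hxp : Integrable (fun x => -(x * gaussianPDFReal 0 1 x)) := by
    have := ((integrable_mul_exp_neg_mul_sq (b := 1/2) (by norm_num)).const_mul
      ((√(2 * Real.pi))⁻¹)).neg
    refine this.congr (ae_of_all _ fun x => ?_)
    simp only [hpdf, Pi.neg_apply]
    ring
  have key := integral_mul_deriv_eq_deriv_mul_of_integrable (u := f) (u' := f')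
    (v := gaussianPDFReal 0 1) (v' := fun x => -(x * gaussianPDFReal 0 1 x))
    (fun x _ => hd x) (fun x _ => hpd x)
    (hxp.bdd_mul hfc.aestronglyMeasurable (c := C) (ae_of_all _ hb))
    (hip.bdd_mul hf'.aestronglyMeasurable (c := C) (ae_of_all _ hb'))
    (hip.bdd_mul hfc.aestronglyMeasurable (c := C) (ae_of_all _ hb))
  have e1 : ∫ x, gaussianPDFReal 0 1 x • (x * f x)
      = - ∫ x, f x * (-(x * gaussianPDFReal 0 1 x)) := by
    rw [← integral_neg]
    congr 1; ext x; simp only [smul_eq_mul]; ring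
  rw [e1, key, neg_neg]
  congr 1; ext x; simp only [smul_eq_mul]; ring

lemma gauss_integrable {Ω : Type*} [MeasurableSpace Ω] {μ : Measure Ω} {X : Ω → ℝ}
    (hX : Measurable X) (hg : Measure.map X μ = gaussianReal 0 1) : Integrable X μ := by
  have h : Integrable id (Measure.map X μ) := by
    rw [hg]
    exact (memLp_id_gaussianReal 1).integrable le_rfl
  exact h.comp_measurable hX

lemma stein_multi {Ω ι : Type*} [MeasurableSpace Ω] {μ : Measure Ω} [IsProbabilityMeasure μ]
    [Fintype ι] [DecidableEq ι] (X : ι → Ω → ℝ) (hX : ∀ i, Measurable (X i))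
    (hind : iIndepFun X μ) (p : ι) (hg : Measure.map (X p) μ = gaussianReal 0 1)
    (f f' : (ι → ℝ) → ℝ) (C : ℝ) (hf : Continuous f) (hf' : Continuous f')
    (hb : ∀ x, |f x| ≤ C) (hb' : ∀ x, |f' x| ≤ C)
    (hd : ∀ y t, HasDerivAt (fun t => f (Function.update y p t)) (f' (Function.update y p t)) t) :
    ∫ ω, X p ω * f (fun i => X i ω) ∂μ = ∫ ω, f' (fun i => X i ω) ∂μ := by
  set Y : Ω → ι → ℝ := fun ω => Function.update (fun i => X i ω) p 0 with hY
  have hYm : Measurable Y := by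
    refine measurable_pi_lambda _ fun i => ?_
    by_cases h : i = p
    · subst h; simp [hY]
    · simpa [hY, h] using hX i
  have hup : ∀ ω, Function.update (Y ω) p (X p ω) = fun i => X i ω := by
    intro ω; simp [hY]
  have hXY : IndepFun Y (X p) μ := by
    have h := hind.indepFun_finset (Finset.univ.erase p) {p} (by simp) hX
    let φ : (↥(Finset.univ.erase p : Finset ι) → ℝ) → ι → ℝ := fun z i =>
      if hi : i = p then 0 else z ⟨i, by simp [hi]⟩
    have hφ : Measurable φ := by
      refine measurable_pi_lambda _ fun i => ?_
      by_cases hi : i = p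
      · simp [φ, hi]
      · simp only [φ, hi, dif_neg, not_false_eq_true]; exact measurable_pi_apply _
    have hψ : Measurable (fun z : (↥({p} : Finset ι) → ℝ) => z ⟨p, by simp⟩) :=
      measurable_pi_apply _
    have h2 := h.comp hφ hψ
    have hYe : Y = φ ∘ fun a (i : ↥(Finset.univ.erase p : Finset ι)) => X i a := by
      ext ω i
      by_cases hi : i = p
      · subst hi; simp [hY, φ]
      · simp [hY, φ, hi]
    rw [hYe]
    exact h2
  have hmap : μ.map (fun ω => (Y ω, X p ω)) = (μ.map Y).prod (gaussianReal 0 1) := by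
    rw [(indepFun_iff_map_prod_eq_prod_map_map hYm.aemeasurable (hX p).aemeasurable).1 hXY, hg]
  have : IsProbabilityMeasure (μ.map Y) := Measure.isProbabilityMeasure_map hYm.aemeasurable
  have hpm : Measurable (fun ω => (Y ω, X p ω)) := hYm.prodMk (hX p)
  have hcu : Continuous (fun z : (ι → ℝ) × ℝ => Function.update z.1 p z.2) :=
    continuous_fst.update p continuous_snd
  have tr : ∀ F : (ι → ℝ) × ℝ → ℝ, Continuous F → Integrable (fun ω => F (Y ω, X p ω)) μ →
      ∫ ω, F (Y ω, X p ω) ∂μ = ∫ y, ∫ t, F (y, t) ∂(gaussianReal 0 1) ∂(μ.map Y) := by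
    intro F hF hi
    rw [← integral_map (μ := μ) (φ := fun ω => (Y ω, X p ω)) (f := F) hpm.aemeasurable
      hF.aestronglyMeasurable, hmap, integral_prod]
    rw [← hmap]
    exact (integrable_map_measure hF.aestronglyMeasurable hpm.aemeasurable).2 hi
  have hXm : Measurable (fun ω i => X i ω) := measurable_pi_lambda _ hX
  have hI1 : Integrable (fun ω => X p ω * f (fun i => X i ω)) μ :=
    (gauss_integrable (hX p) hg).mul_bdd (c := C) (hf.measurable.comp hXm).aestronglyMeasurable
      (ae_of_all _ fun ω => hb _)
  have hI2 : Integrable (fun ω => f' (fun i => X i ω)) μ :=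
    Integrable.of_bound (hf'.measurable.comp hXm).aestronglyMeasurable C
      (ae_of_all _ fun ω => hb' _)
  have a1 := tr (fun z => z.2 * f (Function.update z.1 p z.2))
    (continuous_snd.mul (hf.comp hcu)) (by simpa only [hup] using hI1)
  have a2 := tr (fun z => f' (Function.update z.1 p z.2))
    (hf'.comp hcu) (by simpa only [hup] using hI2)
  simp only [hup] at a1 a2
  rw [a1, a2]
  congr 1; ext y
  exact stein_one (fun t => f (Function.update y p t)) (fun t => f' (Function.update y p t)) C
    (hd y) (hf'.comp (continuous_const.update p continuous_id)) (fun _ => hb _) (fun _ => hb' _)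

section model
variable {ι K : Type*} [Fintype ι] [Fintype K] [Nonempty K]

def Wt (s : ι → K → ℝ) (c : ℝ) (x : ι → ℝ) (σ : K) : ℝ := Real.exp (c * ∑ p, x p * s p σ)

def Zt (s : ι → K → ℝ) (c : ℝ) (x : ι → ℝ) : ℝ := ∑ σ, Wt s c x σ

def Mt (s : ι → K → ℝ) (c : ℝ) (p : ι) (x : ι → ℝ) : ℝ := (∑ σ, Wt s c x σ * s p σ) / Zt s c x

lemma Zt_pos (s : ι → K → ℝ) (c : ℝ) (x : ι → ℝ) : 0 < Zt s c x :=
  Finset.sum_pos (fun _ _ => Real.exp_pos _) Finset.univ_nonempty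

lemma Mt_cont (s : ι → K → ℝ) (c : ℝ) (p : ι) : Continuous (Mt s c p) := by
  have hW : ∀ σ, Continuous fun x => Wt s c x σ := by
    intro σ; unfold Wt; fun_prop
  refine Continuous.div ?_ ?_ fun x => (Zt_pos s c x).ne'
  · exact continuous_finsetSum _ fun σ _ => (hW σ).mul continuous_const
  · exact continuous_finsetSum _ fun σ _ => hW σ

lemma Mt_bound (s : ι → K → ℝ) (hs : ∀ p σ, s p σ ^ 2 = 1) (c : ℝ) (p : ι) (x : ι → ℝ) :
    |Mt s c p x| ≤ 1 := by
  unfold Mt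
  rw [abs_div, abs_of_pos (Zt_pos s c x), div_le_one (Zt_pos s c x)]
  refine (Finset.abs_sum_le_sum_abs _ _).trans (Finset.sum_le_sum fun σ _ => ?_)
  have h1 : |s p σ| = 1 := by
    rw [← sq_eq_sq₀ (abs_nonneg _) zero_le_one, sq_abs, hs, one_pow]
  rw [abs_mul, h1, mul_one]
  exact (abs_of_pos (Real.exp_pos _)).le

lemma Mt_deriv [DecidableEq ι] (s : ι → K → ℝ) (hs : ∀ p σ, s p σ ^ 2 = 1) (c : ℝ) (p : ι)
    (y : ι → ℝ) (t : ℝ) :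
    HasDerivAt (fun t => Mt s c p (Function.update y p t))
      (c * (1 - Mt s c p (Function.update y p t) ^ 2)) t := by
  have hW : ∀ σ, HasDerivAt (fun t => Wt s c (Function.update y p t) σ)
      (Wt s c (Function.update y p t) σ * (c * s p σ)) t := by
    intro σ
    have h0 : ∀ t, ∑ q, Function.update y p t q * s q σ
        = t * s p σ + ∑ q ∈ Finset.univ.erase p, y q * s q σ := by
      intro t
      rw [← Finset.add_sum_erase _ _ (Finset.mem_univ p), Function.update_self]
      congr 1
      refine Finset.sum_congr rfl fun q hq => ?_
      rw [Function.update_of_ne (Finset.ne_of_mem_erase hq)]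
    unfold Wt
    refine HasDerivAt.exp ?_
    simp only [h0]
    exact (((hasDerivAt_mul_const (s p σ)).add_const _).const_mul c)
  have hZ : HasDerivAt (fun t => Zt s c (Function.update y p t))
      (∑ σ, Wt s c (Function.update y p t) σ * (c * s p σ)) t :=
    HasDerivAt.fun_sum fun σ _ => hW σ
  have hA : HasDerivAt (fun t => ∑ σ, Wt s c (Function.update y p t) σ * s p σ)
      (∑ σ, Wt s c (Function.update y p t) σ * (c * s p σ) * s p σ) t :=
    HasDerivAt.fun_sum fun σ _ => (hW σ).mul_const _
  have hpos := Zt_pos s c (Function.update y p t)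
  refine (hA.div hZ hpos.ne').congr_deriv ?_
  have e1 : ∑ σ, Wt s c (Function.update y p t) σ * (c * s p σ) * s p σ
      = c * Zt s c (Function.update y p t) := by
    unfold Zt
    rw [Finset.mul_sum]
    refine Finset.sum_congr rfl fun σ _ => ?_
    linear_combination (Wt s c (Function.update y p t) σ * c) * hs p σ
  have e2 : ∑ σ, Wt s c (Function.update y p t) σ * (c * s p σ)
      = c * ∑ σ, Wt s c (Function.update y p t) σ * s p σ := by
    rw [Finset.mul_sum]
    refine Finset.sum_congr rfl fun σ _ => ?_
    ring
  rw [e1, e2]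
  unfold Mt
  field_simp

end model

abbrev Pr (N : ℕ) := {q : Fin N × Fin N // q.1 < q.2}

def sg (N : ℕ) (j : Fin N) (σ : Conf N) : ℝ := if σ j = 0 then 1 else -1

def ss (N : ℕ) (p : Pr N) (σ : Conf N) : ℝ := sg N p.1.1 σ * sg N p.1.2 σ

lemma ss_sq (N : ℕ) (p : Pr N) (σ : Conf N) : ss N p σ ^ 2 = 1 := by
  unfold ss sg
  split_ifs <;> norm_num

lemma sum_pairs {M : Type*} [AddCommMonoid M] (N : ℕ) (F : Fin N → Fin N → M) :
    (∑ j : Fin N, ∑ k : Fin N, if j < k then F j k else 0) = ∑ p : Pr N, F p.1.1 p.1.2 := by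
  rw [← Fintype.sum_prod_type' (f := fun j k => if j < k then F j k else 0), ← Finset.sum_filter]
  exact (Finset.sum_subtype _ (by simp) (fun q : Fin N × Fin N => F q.1 q.2))

lemma Sz_mul (N : ℕ) (p : Pr N) :
    Sz N p.1.1 * Sz N p.1.2 = diagonal fun σ => ((ss N p σ : ℝ) : ℂ) := by
  unfold Sz
  rw [diagonal_mul_diagonal]
  congr 1; ext σ
  unfold ss sg
  split_ifs <;> simp

lemma UN_eq (N : ℕ) (g : Fin N → Fin N → ℝ) :
    UN N g = diagonal fun σ =>
      ((-(1 / Real.sqrt N) * ∑ p : Pr N, g p.1.1 p.1.2 * ss N p σ : ℝ) : ℂ) := by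
  unfold UN
  rw [sum_pairs N (fun j k => g j k • (Sz N j * Sz N k))]
  simp only [Sz_mul]
  ext σ τ
  by_cases h : σ = τ
  · subst h
    simp [Matrix.sum_apply]
  · simp [Matrix.sum_apply, h]

lemma gibbs_diag {n : Type*} [Fintype n] [DecidableEq n] (β : ℝ) (u a : n → ℝ) :
    gibbs β (diagonal fun σ => ((u σ : ℝ) : ℂ)) (diagonal fun σ => ((a σ : ℝ) : ℂ))
      = (∑ σ, Real.exp (-β * u σ) * a σ) / ∑ σ, Real.exp (-β * u σ) := by
  unfold gibbs
  have h : NormedSpace.exp ((-β) • diagonal fun σ => ((u σ : ℝ) : ℂ))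
      = diagonal fun σ => ((Real.exp (-β * u σ) : ℝ) : ℂ) := by
    rw [← diagonal_smul, exp_diagonal]
    congr 1; ext σ
    rw [Pi.coe_exp]
    simp [← Complex.exp_eq_exp_ℂ]
  rw [h, diagonal_mul_diagonal, trace_diagonal, trace_diagonal]
  rw [← Complex.ofReal_re ((∑ σ, Real.exp (-β * u σ) * a σ) / ∑ σ, Real.exp (-β * u σ))]
  push_cast
  rfl

lemma HN_eq (N : ℕ) (J : ℝ) (g : Fin N → Fin N → ℝ) :
    HN N J 0 g = diagonal fun σ =>
      ((J * (-(1 / Real.sqrt N) * ∑ p : Pr N, g p.1.1 p.1.2 * ss N p σ) : ℝ) : ℂ) := by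
  unfold HN
  rw [zero_smul, sub_zero, UN_eq, ← diagonal_smul]
  congr 1; ext σ
  simp

lemma wt_eq (N : ℕ) (β J : ℝ) (g : Fin N → Fin N → ℝ) (σ : Conf N) :
    Real.exp (-β * (J * (-(1 / Real.sqrt N) * ∑ p : Pr N, g p.1.1 p.1.2 * ss N p σ)))
      = Wt (ss N) (β * J / Real.sqrt N) (fun p => g p.1.1 p.1.2) σ := by
  unfold Wt
  congr 1
  ring

lemma gibbs_SS (N : ℕ) (β J : ℝ) (g : Fin N → Fin N → ℝ) (p : Pr N) :
    gibbs β (HN N J 0 g) (Sz N p.1.1 * Sz N p.1.2)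
      = Mt (ss N) (β * J / Real.sqrt N) p (fun p => g p.1.1 p.1.2) := by
  rw [HN_eq, Sz_mul, gibbs_diag]
  simp only [wt_eq]
  rfl

lemma gibbs_UN (N : ℕ) (β J : ℝ) (g : Fin N → Fin N → ℝ) :
    gibbs β (HN N J 0 g) (UN N g)
      = -(1 / Real.sqrt N) * ∑ p : Pr N, g p.1.1 p.1.2 *
        Mt (ss N) (β * J / Real.sqrt N) p (fun p => g p.1.1 p.1.2) := by
  rw [HN_eq, UN_eq, gibbs_diag]
  simp only [wt_eq]
  unfold Mt
  simp only [mul_div_assoc', ← Finset.sum_div]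
  congr 1
  simp only [Finset.mul_sum]
  rw [Finset.sum_comm]
  refine Finset.sum_congr rfl fun p _ => Finset.sum_congr rfl fun σ _ => ?_
  ring

lemma card_Pr (N : ℕ) : (∑ _p : Pr N, (1 : ℝ)) = N * (N - 1) / 2 := by
  have h := sum_pairs N (fun _ _ => (1 : ℝ))
  rw [← h]
  have h2 : ∀ j k : Fin N, (if j < k then (1:ℝ) else 0) + (if k < j then (1:ℝ) else 0)
      = 1 - if j = k then 1 else 0 := by
    intro j k
    rcases lt_trichotomy j k with h | h | h
    · simp [h, h.ne, h.not_gt]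
    · simp [h]
    · simp [h, h.ne', h.not_gt]
  have h3 : (∑ j : Fin N, ∑ k : Fin N, if j < k then (1:ℝ) else 0)
      + (∑ j : Fin N, ∑ k : Fin N, if k < j then (1:ℝ) else 0) = N * N - N := by
    rw [← Finset.sum_add_distrib]
    simp only [← Finset.sum_add_distrib, h2]
    simp
  rw [Finset.sum_comm (f := fun j k : Fin N => if k < j then (1:ℝ) else 0)] at h3
  linarith


theorem stmt12
    {Ω : Type*} [MeasurableSpace Ω] (μ : Measure Ω) [IsProbabilityMeasure μ]
    (N : ℕ) (hN : 2 ≤ N) (β J : ℝ) (hβ : 0 < β) (hJ : 0 < J)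
    (g : Ω → Fin N → Fin N → ℝ)
    (hmeas : ∀ j k : Fin N, Measurable fun ω => g ω j k)
    (hgauss : ∀ j k : Fin N, j < k →
      Measure.map (fun ω => g ω j k) μ = gaussianReal 0 1)
    (hindep : iIndepFun
      (fun (p : {q : Fin N × Fin N // q.1 < q.2}) ω => g ω p.1.1 p.1.2) μ) :
    (∫ ω, qN N β J 0 (g ω) ∂μ)
      = 1 + (2 / (β * J)) * (1 / ((N : ℝ) - 1))
          * ∫ ω, gibbs β (HN N J 0 (g ω)) (UN N (g ω)) ∂μ := by
  classical
  set c : ℝ := β * J / Real.sqrt N with hc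
  have hNpos : (0:ℝ) < N := by exact_mod_cast (by omega : 0 < N)
  have hN1 : (0:ℝ) < (N:ℝ) - 1 := by
    have : (2:ℝ) ≤ N := by exact_mod_cast hN
    linarith
  have hsq : (0:ℝ) < Real.sqrt N := Real.sqrt_pos.2 hNpos
  have hc0 : 0 < c := by positivity
  let X : Pr N → Ω → ℝ := fun p ω => g ω p.1.1 p.1.2
  have hX : ∀ p, Measurable (X p) := fun p => hmeas _ _
  have hXg : ∀ p, Measure.map (X p) μ = gaussianReal 0 1 := fun p => hgauss _ _ p.2
  have hXm : Measurable (fun ω i => X i ω) := measurable_pi_lambda _ hX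
  let m : Pr N → Ω → ℝ := fun p ω => Mt (ss N) c p (fun i => X i ω)
  have hm : ∀ p, Measurable (m p) := fun p => (Mt_cont (ss N) c p).measurable.comp hXm
  have hmb : ∀ p ω, |m p ω| ≤ 1 := fun p ω => Mt_bound _ (ss_sq N) _ _ _
  have hm2b : ∀ p ω, |m p ω ^ 2| ≤ 1 := fun p ω => by
    rw [abs_pow]; exact pow_le_one₀ (abs_nonneg _) (hmb p ω)
  have hm2 : ∀ p, Integrable (fun ω => m p ω ^ 2) μ := fun p =>
    Integrable.of_bound ((hm p).pow_const 2).aestronglyMeasurable 1 (ae_of_all _ (hm2b p))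
  have hXi : ∀ p, Integrable (fun ω => X p ω * m p ω) μ := fun p =>
    (gauss_integrable (hX p) (hXg p)).mul_bdd (c := 1) (hm p).aestronglyMeasurable
      (ae_of_all _ (hmb p))
  have ibp : ∀ p, ∫ ω, X p ω * m p ω ∂μ = c * (1 - ∫ ω, m p ω ^ 2 ∂μ) := by
    intro p
    have := stein_multi X hX hindep p (hXg p) (Mt (ss N) c p)
      (fun x => c * (1 - Mt (ss N) c p x ^ 2)) (max 1 c) (Mt_cont _ _ _)
      (by have := Mt_cont (ss N) c p; fun_prop)
      (fun x => (Mt_bound _ (ss_sq N) _ _ _).trans (le_max_left _ _))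
      (fun x => by
        refine le_trans ?_ (le_max_right _ _)
        have h1 := Mt_bound _ (ss_sq N) c p x
        have h2 : Mt (ss N) c p x ^ 2 ≤ 1 := (sq_le_one_iff_abs_le_one _).2 h1
        rw [abs_of_nonneg (mul_nonneg hc0.le (by linarith))]
        nlinarith [sq_nonneg (Mt (ss N) c p x)])
      (fun y t => Mt_deriv _ (ss_sq N) c p y t)
    refine this.trans ?_
    rw [integral_const_mul, integral_sub (integrable_const _) (hm2 p)]
    simp
  have hq : ∀ ω, qN N β J 0 (g ω) = (2 / ((N : ℝ) * ((N : ℝ) - 1))) * ∑ p, m p ω ^ 2 := by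
    intro ω
    unfold qN
    rw [sum_pairs N (fun j k => (gibbs β (HN N J 0 (g ω)) (Sz N j * Sz N k)) ^ 2)]
    simp only [gibbs_SS]
    rfl
  have hU : ∀ ω, gibbs β (HN N J 0 (g ω)) (UN N (g ω))
      = -(1 / Real.sqrt N) * ∑ p, X p ω * m p ω := fun ω => gibbs_UN N β J (g ω)
  simp only [hq, hU]
  rw [integral_const_mul, integral_const_mul, integral_finsetSum _ (fun p _ => hm2 p),
    integral_finsetSum _ (fun p _ => hXi p)]
  simp only [ibp]
  rw [← Finset.mul_sum, Finset.sum_sub_distrib, card_Pr]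
  generalize (∑ p, ∫ ω, m p ω ^ 2 ∂μ) = Q
  have hs2 : Real.sqrt N * Real.sqrt N = N := Real.mul_self_sqrt hNpos.le
  have e : -(1 / Real.sqrt N) * (c * ((N:ℝ) * (N - 1) / 2 - Q))
      = -(β * J / N) * ((N:ℝ) * (N - 1) / 2 - Q) := by
    rw [hc, ← hs2]
    simp only [Real.sqrt_mul_self hsq.le]
    field_simp
  rw [e]
  field_simp
  ring
end
end
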